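/- arXiv:2602.15390 — 5 statements merged into one kernel-verified Lean document; each statement's English description precedes it below -/
import Mathlib

section
/- Let d ≥ 1, let Λ ⊂ ℝ^d be a full-rank lattice with generating matrix T (an invertible matrix with Λ = Tℤ^d), and let Λ⊥ be its dual lattice. Then the mesh ratio of Λ satisfies ρ(Λ) ≤ C_d · min( √d · |det(T)| / (λ₁(Λ))^d , d · |det(T⁻¹)| / (λ₁(Λ⊥))^d ), where C_d = 2^d Γ(1+d/2)/π^{d/2} and Γ denotes the gamma function. -/
open scoped RealInnerProductSpace

noncomputable section

/-- `ℝ^d` with the Euclidean norm. -/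
abbrev Euc (d : ℕ) := EuclideanSpace ℝ (Fin d)

/-- `Λ` is the full-rank lattice generated by the columns of the invertible matrix `T`. -/
def IsLatticeOf {d : ℕ} (Λ : Set (Euc d)) (T : Matrix (Fin d) (Fin d) ℝ) : Prop :=
  IsUnit T.det ∧ Λ = { v : Euc d | ∃ k : Fin d → ℤ, ∀ i, v i = ∑ j, T i j * (k j : ℝ) }

/-- Covering radius of `Λ` with respect to all of `ℝ^d`:
`h(Λ) = sup_{x ∈ ℝ^d} inf_{y ∈ Λ} ‖x - y‖₂`. -/
def covRad {d : ℕ} (Λ : Set (Euc d)) : ℝ :=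
  ⨆ x : Euc d, sInf (Set.image (dist x) Λ)

/-- Separation radius of a lattice: half the length of the shortest nonzero vector. -/
def sepRad {d : ℕ} (Λ : Set (Euc d)) : ℝ :=
  (1 / 2) * sInf (Set.image norm (Λ \ {0}))

/-- Mesh ratio `ρ(Λ) = h(Λ)/q(Λ)` of a lattice. -/
def meshRatio {d : ℕ} (Λ : Set (Euc d)) : ℝ := covRad Λ / sepRad Λ

/-- The `j`-th successive minimum of `Λ` with respect to the Euclidean unit ball:
`λ_j(Λ) = inf { r > 0 : dim span(Λ ∩ rB_d) ≥ j }`. -/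
def succMin {d : ℕ} (Λ : Set (Euc d)) (j : ℕ) : ℝ :=
  sInf { r : ℝ | 0 < r ∧
    j ≤ Module.finrank ℝ (Submodule.span ℝ (Λ ∩ Metric.closedBall (0 : Euc d) r)) }

/-- The dual lattice `Λ⊥ = { y : x·y ∈ ℤ for all x ∈ Λ }`. -/
def dualLat {d : ℕ} (Λ : Set (Euc d)) : Set (Euc d) :=
  { y | ∀ x ∈ Λ, ∃ n : ℤ, ⟪x, y⟫ = (n : ℝ) }

/-- The closed unit cube `[0,1]^d`. -/
def unitCube (d : ℕ) : Set (Euc d) := { x | ∀ i, 0 ≤ x i ∧ x i ≤ 1 }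

/-- The half-open unit cube `[0,1)^d`. -/
def halfOpenCube (d : ℕ) : Set (Euc d) := { x | ∀ i, 0 ≤ x i ∧ x i < 1 }

/-- Covering radius of a point set `P` with respect to the unit cube `[0,1]^d`. -/
def covRadCube {d : ℕ} (P : Set (Euc d)) : ℝ :=
  ⨆ x : unitCube d, sInf (Set.image (dist (x : Euc d)) P)

/-- Separation radius of a point set:
`q(P) = (1/2) min_{x ≠ y ∈ P} ‖x - y‖₂`. -/
def sepRadSet {d : ℕ} (P : Set (Euc d)) : ℝ :=
  (1 / 2) * sInf { r : ℝ | ∃ x ∈ P, ∃ y ∈ P, x ≠ y ∧ r = dist x y }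

/-- Mesh ratio `ρ(P) = h(P)/q(P)` of a point set with respect to `[0,1]^d`. -/
def meshRatioSet {d : ℕ} (P : Set (Euc d)) : ℝ := covRadCube P / sepRadSet P

/-- The constant `C_d = 2^d Γ(1+d/2) / π^{d/2}`. -/
def Cd (d : ℕ) : ℝ := 2 ^ d * Real.Gamma (1 + (d : ℝ) / 2) / Real.pi ^ ((d : ℝ) / 2)

theorem exists_shortest {E : Type*} [NormedAddCommGroup E] [NormedSpace ℝ E]
    [FiniteDimensional ℝ E] (S : AddSubgroup E) {δ : ℝ} (hδ : 0 < δ)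
    (h : ∀ v ∈ S, v ≠ 0 → δ ≤ ‖v‖) (hne : ∃ v ∈ S, v ≠ 0) :
    ∃ v0 ∈ S, v0 ≠ 0 ∧ ∀ v ∈ S, v ≠ 0 → ‖v0‖ ≤ ‖v‖ := by
  have hdisc : DiscreteTopology S := by
    refine DiscreteTopology.of_forall_le_dist hδ ?_
    intro x y hxy
    rw [Subtype.dist_eq, dist_eq_norm]
    exact h _ (S.sub_mem x.2 y.2) (fun h0 => hxy (Subtype.ext (sub_eq_zero.mp h0)))
  have : ProperSpace E := FiniteDimensional.proper ℝ E
  obtain ⟨w, hw, hw0⟩ := hne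
  have hfin : Set.Finite (Metric.closedBall (0:E) ‖w‖ ∩ (S : Set E)) := by
    refine Metric.finite_isBounded_inter_isClosed ⟨hdisc⟩ Metric.isBounded_closedBall ?_
    exact AddSubgroup.isClosed_of_discrete
  have hfin2 : Set.Finite ((Metric.closedBall (0:E) ‖w‖ ∩ (S : Set E)) \ {0}) := hfin.sdiff
  obtain ⟨v0, hv0, hmin⟩ := hfin2.exists_minimalFor (fun v => ‖v‖) _
    ⟨w, ⟨⟨by simp, hw⟩, by simpa using hw0⟩⟩
  refine ⟨v0, hv0.1.2, by simpa using hv0.2, fun v hv hvne => ?_⟩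
  by_contra hlt
  push Not at hlt
  have h1 : ‖v0‖ ≤ ‖w‖ := by simpa using hv0.1.1
  have := hmin (j := v) ⟨⟨by simpa using (hlt.le.trans h1), hv⟩, by simpa using hvne⟩ hlt.le
  exact absurd this (not_le.mpr hlt)

/-- Transference-type covering bound, by successive projection along shortest dual vectors. -/
theorem transference_aux {E : Type*} [NormedAddCommGroup E] [InnerProductSpace ℝ E]
    [FiniteDimensional ℝ E] {G : Type*} [AddCommGroup G] (n : ℕ) :
    ∀ (W : Submodule ℝ E), Module.finrank ℝ W ≤ n →
    ∀ (f : G →+ E) (φ : G →+ ℝ) (δ : ℝ), 0 < δ → (∀ g, f g ∈ W) →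
      (∀ g, f g ≠ 0 → δ ≤ ‖f g‖) → (∀ g, f g = 0 → ∃ k : ℤ, φ g = k) →
      ∃ e ∈ W, ‖e‖ ^ 2 ≤ (3 / 4) * ((4 / 3) ^ n - 1) / δ ^ 2 ∧
        ∀ g, ∃ k : ℤ, ⟪e, f g⟫ - φ g = k := by
  induction n with
  | zero =>
    intro W hW f φ δ hδ hf h1 h2
    refine ⟨0, W.zero_mem, by simp, fun g => ?_⟩
    have hWb : W = ⊥ := Submodule.finrank_eq_zero.mp (by omega)
    have : f g = 0 := by
      have := hf g
      rw [hWb] at this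
      simpa using this
    obtain ⟨k, hk⟩ := h2 g this
    exact ⟨-k, by simp [hk]⟩
  | succ n ih =>
    intro W hW f φ δ hδ hf h1 h2
    have hpow : (1:ℝ) ≤ (4/3)^n := one_le_pow₀ (by norm_num)
    by_cases hall : ∀ g, f g = 0
    · refine ⟨0, W.zero_mem, ?_, fun g => ?_⟩
      · rw [norm_zero]
        have : (0:ℝ) ≤ (3 / 4) * ((4 / 3) ^ n * (4/3) - 1) := by linarith
        have h0 : (0:ℝ) ≤ (3 / 4) * ((4 / 3) ^ n * (4/3) - 1) / δ ^ 2 := div_nonneg this (sq_nonneg δ)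
        rw [← pow_succ] at h0
        simpa using h0
      · obtain ⟨k, hk⟩ := h2 g (hall g)
        exact ⟨-k, by simp [hk]⟩
    push Not at hall
    obtain ⟨g1, hg1⟩ := hall
    obtain ⟨y, hyr, hy0, hymin⟩ := exists_shortest f.range hδ
      (by rintro v ⟨g, rfl⟩ hv; exact h1 g hv) ⟨f g1, ⟨g1, rfl⟩, hg1⟩
    obtain ⟨g0, rfl⟩ := hyr
    set y := f g0 with hy
    have hyn : 0 < ‖y‖ := norm_pos_iff.mpr hy0
    have hyδ : δ ≤ ‖y‖ := h1 g0 hy0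
    have hyy : ⟪y, y⟫ = ‖y‖^2 := real_inner_self_eq_norm_sq y
    -- coefficient functional
    let c : E → ℝ := fun w => ⟪y, w⟫ / ‖y‖^2
    let t : ℝ := φ g0 - round (φ g0)
    have ht : |t| ≤ 1/2 := abs_sub_round _
    let e0 : E := (t / ‖y‖^2) • y
    let P : E →ₗ[ℝ] E := LinearMap.id - ((‖y‖^2)⁻¹ • (innerₛₗ ℝ y)).smulRight y
    have hP : ∀ w, P w = w - c w • y := by
      intro w
      simp [P, c, div_eq_inv_mul]
    have hyP : ∀ w, ⟪y, P w⟫ = 0 := by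
      intro w
      rw [hP, inner_sub_right, inner_smul_right, hyy]
      simp only [c]
      field_simp
      ring
    let W' : Submodule ℝ E := W ⊓ (innerₛₗ ℝ y).ker
    have hW'lt : W' < W := by
      refine lt_of_le_of_ne inf_le_left (fun h => ?_)
      have : y ∈ W' := by rw [h]; exact hf g0
      have h2 := this.2
      simp only [LinearMap.mem_ker, innerₛₗ_apply_apply, SetLike.mem_coe] at h2
      exact hy0 (inner_self_eq_zero.mp h2)
    have hW'n : Module.finrank ℝ W' ≤ n := by
      have := Submodule.finrank_lt_finrank_of_lt hW'lt
      omega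
    let f' : G →+ E := P.toAddMonoidHom.comp f
    let φ' : G →+ ℝ := φ - (innerₛₗ ℝ e0).toAddMonoidHom.comp f
    have hf'a : ∀ g, f' g = P (f g) := fun g => rfl
    have hφ'a : ∀ g, φ' g = φ g - ⟪e0, f g⟫ := fun g => rfl
    have hφ'0 : φ' g0 = round (φ g0) := by
      rw [hφ'a]
      simp only [e0, inner_smul_left, ← hy, hyy]
      simp only [t]
      simp
      field_simp
      ring
    have hnormP : ∀ w, ‖w‖^2 = ‖P w‖^2 + (c w)^2 * ‖y‖^2 := by
      intro w
      have : w = P w + c w • y := by rw [hP]; abel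
      conv_lhs => rw [this]
      rw [norm_add_sq_real, inner_smul_right, real_inner_comm, hyP, norm_smul, mul_pow,
        Real.norm_eq_abs, sq_abs]
      ring
    have hPy : P y = 0 := by
      rw [hP]; simp only [c]; rw [hyy, div_self (by positivity)]; simp
    have hshift : ∀ g, ∀ k : ℤ, f (g - k • g0) = f g - (k:ℝ) • y := by
      intro g k
      rw [map_sub, map_zsmul, Int.cast_smul_eq_zsmul]
    -- reduced elements
    have hred : ∀ g, f (g - (round (c (f g))) • g0) ≠ 0 → (3/4) * ‖y‖^2 ≤ ‖P (f g)‖^2 := by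
      intro g hg
      have hle := hymin _ ⟨_, rfl⟩ hg
      have hle2 : ‖y‖^2 ≤ ‖f (g - (round (c (f g))) • g0)‖^2 := by gcongr
      rw [hnormP (f (g - (round (c (f g))) • g0))] at hle2
      have e1 : P (f (g - (round (c (f g))) • g0)) = P (f g) := by
        rw [hshift, map_sub, map_smul, hPy]; simp
      have e2 : c (f (g - (round (c (f g))) • g0)) = c (f g) - round (c (f g)) := by
        rw [hshift]; simp only [c]; rw [inner_sub_right, inner_smul_right, hyy]
        field_simp
      rw [e1, e2] at hle2
      have h4 : (c (f g) - round (c (f g)))^2 ≤ 1/4 := by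
        have := abs_sub_round (c (f g))
        rw [← sq_abs]
        nlinarith [abs_nonneg (c (f g) - round (c (f g)))]
      nlinarith [sq_nonneg ‖y‖]
    let δ' : ℝ := Real.sqrt (3/4) * ‖y‖
    have hδ' : 0 < δ' := by positivity
    have hδ'2 : δ'^2 = 3/4 * ‖y‖^2 := by
      simp only [δ', mul_pow]; rw [Real.sq_sqrt (by norm_num)]
    have c1 : ∀ g, f' g ∈ W' := by
      intro g
      rw [hf'a]
      refine ⟨?_, by simpa using hyP _⟩
      rw [hP]
      exact W.sub_mem (hf g) (W.smul_mem _ (hf g0))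
    have c2 : ∀ g, f' g ≠ 0 → δ' ≤ ‖f' g‖ := by
      intro g hg
      rw [hf'a] at hg ⊢
      have hne : f (g - (round (c (f g))) • g0) ≠ 0 := by
        intro h0
        rw [hshift] at h0
        apply hg
        rw [sub_eq_zero.mp h0, map_smul, hPy, smul_zero]
      have := hred g hne
      rw [← hδ'2] at this
      exact (sq_le_sq₀ hδ'.le (norm_nonneg _)).mp this
    have c3 : ∀ g, f' g = 0 → ∃ k : ℤ, φ' g = k := by
      intro g hg
      rw [hf'a] at hg
      have h0 : f (g - (round (c (f g))) • g0) = 0 := by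
        by_contra hne
        have := hred g hne
        rw [hg, norm_zero] at this
        have : 0 < ‖y‖^2 := by positivity
        linarith
      obtain ⟨k, hk⟩ := h2 _ h0
      have e1 : φ' (g - (round (c (f g))) • g0) = k := by
        rw [hφ'a, h0, hk]; simp
      rw [map_sub, map_zsmul, hφ'0] at e1
      refine ⟨k + round (c (f g)) * round (φ g0), ?_⟩
      push_cast
      rw [← e1]
      simp
    obtain ⟨e', he'W, he'n, he'⟩ := ih W' hW'n f' φ' δ' hδ' c1 c2 c3
    · refine ⟨e0 + e', W.add_mem (W.smul_mem _ (hf g0)) he'W.1, ?_, ?_⟩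
      · have hye : ⟪y, e'⟫ = 0 := by simpa using he'W.2
        rw [norm_add_sq_real]
        simp only [e0, inner_smul_left, hye]
        rw [hδ'2] at he'n
        rw [norm_smul, mul_pow, Real.norm_eq_abs, sq_abs]
        have ht2 : t^2 ≤ 1/4 := by
          rw [← sq_abs]; nlinarith [abs_nonneg t]
        have : (t / ‖y‖^2)^2 * ‖y‖^2 = t^2 / ‖y‖^2 := by field_simp
        rw [this]
        have hA : t^2 / ‖y‖^2 ≤ (1/4) / ‖y‖^2 := by gcongr
        have hB : 3 / 4 * ((4 / 3) ^ n - 1) / (3 / 4 * ‖y‖ ^ 2) = ((4/3)^n - 1) / ‖y‖^2 := by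
          field_simp
        rw [hB] at he'n
        have hC : (3 / 4) * ((4 / 3) ^ (n+1) - 1) / ‖y‖ ^ 2 ≤ (3 / 4) * ((4 / 3) ^ (n+1) - 1) / δ ^ 2 := by
          have : (0:ℝ) ≤ (3 / 4) * ((4 / 3) ^ (n+1) - 1) := by rw [pow_succ]; linarith
          gcongr
        refine le_trans ?_ hC
        have hD : (3 / 4) * ((4 / 3) ^ (n+1) - 1) / ‖y‖ ^ 2 = (1/4) / ‖y‖^2 + ((4/3)^n - 1) / ‖y‖^2 := by
          rw [pow_succ]; field_simp; ring
        rw [hD]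
        simp only [mul_zero, add_zero]
        linarith
      · intro g
        obtain ⟨k, hk⟩ := he' g
        refine ⟨k, ?_⟩
        rw [← hk, hφ'a, hf'a, inner_add_left, hP, inner_sub_right, inner_smul_right]
        have hye : ⟪e', y⟫ = 0 := by rw [real_inner_comm]; simpa using he'W.2
        rw [hye]; ring

theorem babai_aux {E : Type*} [NormedAddCommGroup E] [InnerProductSpace ℝ E]
    [FiniteDimensional ℝ E] (Λ : AddSubgroup E) (M : ℝ) (S : Finset E) :
    (∀ v ∈ S, v ∈ Λ ∧ ‖v‖ ≤ M) →
    ∀ x ∈ Submodule.span ℝ (S : Set E), ∃ u ∈ Λ, u ∈ Submodule.span ℝ (S : Set E) ∧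
      ‖x - u‖ ^ 2 ≤ S.card * (M ^ 2 / 4) := by
  classical
  induction S using Finset.induction_on with
  | empty =>
    intro _ x hx
    refine ⟨0, Λ.zero_mem, by simp, ?_⟩
    have : x = 0 := by simpa using hx
    simp [this]
  | insert v S hv ih =>
    intro hS x hx
    have ih' := ih (fun w hw => hS w (Finset.mem_insert_of_mem hw))
    set W := Submodule.span ℝ (S : Set E) with hW
    obtain ⟨hvΛ, hvM⟩ := hS v (Finset.mem_insert_self _ _)
    rw [Finset.coe_insert, Submodule.mem_span_insert] at hx
    obtain ⟨c, w, hw, rfl⟩ := hx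
    have hle : W ≤ Submodule.span ℝ (((insert v S : Finset E)) : Set E) := by
      apply Submodule.span_mono; simp
    have hvs : v ∈ Submodule.span ℝ (((insert v S : Finset E)) : Set E) :=
      Submodule.subset_span (by simp)
    let p : E := W.starProjection v
    have hp : p ∈ W := W.starProjection_apply_mem v
    have hvp : v - p ∈ Wᗮ := W.sub_starProjection_mem_orthogonal v
    obtain ⟨u, huΛ, huW, hu⟩ := ih' (w + (c - round c) • p)
      (W.add_mem hw (W.smul_mem _ hp))
    refine ⟨u + (round c : ℤ) • v, Λ.add_mem huΛ (Λ.zsmul_mem hvΛ _),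
      Submodule.add_mem _ (hle huW) (zsmul_mem hvs _), ?_⟩
    have e1 : c • v + w - (u + (round c : ℤ) • v) =
        (w + (c - round c) • p - u) + (c - round c) • (v - p) := by
      rw [← Int.cast_smul_eq_zsmul ℝ]; module
    have horth : ⟪w + (c - round c) • p - u, v - p⟫ = 0 :=
      hvp _ (W.sub_mem (W.add_mem hw (W.smul_mem _ hp)) huW)
    rw [e1, norm_add_sq_real, inner_smul_right, horth, norm_smul, mul_pow, Real.norm_eq_abs]
    have h1 : |c - round c| ^ 2 ≤ 1/4 := by
      have := abs_sub_round c
      nlinarith [abs_nonneg (c - round c)]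
    have h2 : ‖v - p‖ ^ 2 ≤ M ^ 2 := by
      have : ‖v‖^2 = ‖p‖^2 + ‖v - p‖^2 := by
        have e : v = p + (v - p) := by abel
        conv_lhs => rw [e]
        rw [norm_add_sq_real, hvp p hp]; ring
      nlinarith [norm_nonneg v, sq_nonneg ‖p‖]
    rw [Finset.card_insert_of_notMem hv]
    push_cast
    have h3 : |c - round c| ^ 2 * ‖v - p‖ ^ 2 ≤ 1/4 * M^2 := by gcongr
    linarith

open MeasureTheory in
theorem pack_volume {d : ℕ} (N : Matrix (Fin d) (Fin d) ℝ) (hN : N.det ≠ 0) (s : ℝ) (p : ℕ)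
    (hcov : ∀ x : Euc d, ∀ F : Finset (Fin d → ℤ),
      (∀ k ∈ F, ‖WithLp.toLp 2 (N.mulVec (fun j => (k j : ℝ))) + x‖ < s) → F.card ≤ p) :
    volume (Metric.ball (0 : Euc d) s) ≤ (p : ENNReal) * ENNReal.ofReal |N.det| := by
  classical
  let B : Set (Fin d → ℝ) := (WithLp.toLp 2) ⁻¹' (Metric.ball (0 : Euc d) s)
  have hBm : MeasurableSet B :=
    (PiLp.volume_preserving_toLp (Fin d)).measurable Metric.isOpen_ball.measurableSet
  have hB : volume B = volume (Metric.ball (0 : Euc d) s) :=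
    (PiLp.volume_preserving_toLp (Fin d)).measure_preimage
      Metric.isOpen_ball.measurableSet.nullMeasurableSet
  have hdet : LinearMap.det (Matrix.toLin' N) = N.det := LinearMap.det_toLin' N
  let K : Set (Fin d → ℝ) := (Matrix.toLin' N) ⁻¹' B
  have hKm : MeasurableSet K :=
    (LinearMap.continuous_of_finiteDimensional (Matrix.toLin' N)).measurable hBm
  have hK : volume K = ENNReal.ofReal |N.det⁻¹| * volume B := by
    have := Measure.addHaar_preimage_linearMap (volume : Measure (Fin d → ℝ))
      (f := Matrix.toLin' N) (by rwa [hdet]) B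
    rwa [hdet] at this
  have hKp : volume K ≤ p := by
    let b := Pi.basisFun ℝ (Fin d)
    have hcount : Countable (Submodule.span ℤ (Set.range b)).toAddSubgroup :=
      inferInstanceAs (Countable (Submodule.span ℤ (Set.range b)))
    have hF := ZSpan.isAddFundamentalDomain' b (volume : Measure (Fin d → ℝ))
    have h1 := hF.lintegral_eq_tsum'' (K.indicator 1)
    rw [lintegral_indicator_one hKm] at h1
    rw [h1]
    have hmeas : ∀ g : (Submodule.span ℤ (Set.range b)).toAddSubgroup,
        AEMeasurable (fun x => K.indicator (1 : (Fin d → ℝ) → ENNReal) (g +ᵥ x))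
          (volume.restrict (ZSpan.fundamentalDomain b)) := by
      intro g
      exact ((measurable_one.indicator hKm).comp (measurable_const_add (g : Fin d → ℝ))).aemeasurable
    rw [← lintegral_tsum hmeas]
    have hvolF : volume (ZSpan.fundamentalDomain b) = 1 := by
      rw [ZSpan.fundamentalDomain_pi_basisFun, volume_pi_pi]; simp
    calc _ ≤ ∫⁻ x in ZSpan.fundamentalDomain b, (p : ENNReal) := by
          apply lintegral_mono
          intro x
          beta_reduce
          rw [ENNReal.tsum_eq_iSup_sum]
          apply iSup_le
          intro S
          have hInteg : ∀ g : (Submodule.span ℤ (Set.range b)).toAddSubgroup,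
              ∃ k : Fin d → ℤ, (g : Fin d → ℝ) = fun j => (k j : ℝ) := by
            intro g
            have := (b.mem_span_iff_repr_mem ℤ (g : Fin d → ℝ)).mp g.2
            choose k hk using this
            exact ⟨k, funext fun j => by simpa [b] using (hk j).symm⟩
          choose κ hκ using hInteg
          have hinj : Function.Injective κ := by
            intro g g' h
            apply Subtype.ext
            rw [hκ g, hκ g', h]
          have hsum : ∑ g ∈ S, K.indicator (1 : (Fin d → ℝ) → ENNReal) (g +ᵥ x)
              = ((Finset.filter (fun g : (Submodule.span ℤ (Set.range b)).toAddSubgroup => (g : Fin d → ℝ) + x ∈ K) S).card : ENNReal) := by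
            rw [Finset.card_filter]
            push_cast
            apply Finset.sum_congr rfl
            intro g _
            simp only [Set.indicator_apply, Pi.one_apply]
            rfl
          rw [hsum]
          have := hcov (WithLp.toLp 2 (N.mulVec x))
            ((Finset.filter (fun g : (Submodule.span ℤ (Set.range b)).toAddSubgroup => (g : Fin d → ℝ) + x ∈ K) S).image κ) (by
              intro k hk
              obtain ⟨g, hg, rfl⟩ := Finset.mem_image.mp hk
              have hg2 := (Finset.mem_filter.mp hg).2
              simp only [K, B, Set.mem_preimage, mem_ball_zero_iff, Matrix.toLin'_apply,
                Matrix.mulVec_add, WithLp.toLp_add] at hg2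
              rw [hκ g] at hg2
              exact hg2)
          rw [Finset.card_image_of_injective _ hinj] at this
          exact_mod_cast this
      _ = p := by rw [setLIntegral_const, hvolF, mul_one]
  rw [hK, hB] at hKp
  have h3 : ENNReal.ofReal |N.det| * ENNReal.ofReal |N.det⁻¹| = 1 := by
    rw [← ENNReal.ofReal_mul (abs_nonneg _), ← abs_mul, mul_inv_cancel₀ hN]; simp
  calc volume (Metric.ball (0 : Euc d) s)
      = ENNReal.ofReal |N.det| * (ENNReal.ofReal |N.det⁻¹| * volume (Metric.ball (0 : Euc d) s)) := by
        rw [← mul_assoc, h3, one_mul]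
    _ ≤ ENNReal.ofReal |N.det| * p := by gcongr
    _ = _ := mul_comm _ _

/-- Volume of the unit ball. -/
def Vd (d : ℕ) : ℝ := √Real.pi ^ d / Real.Gamma ((d : ℝ) / 2 + 1)

theorem Vd_pos (d : ℕ) : 0 < Vd d := by
  unfold Vd
  have := Real.Gamma_pos_of_pos (show (0:ℝ) < (d : ℝ) / 2 + 1 by positivity)
  have := Real.pi_pos
  positivity

theorem Cd_eq (d : ℕ) : Cd d = 2 ^ d / Vd d := by
  have h1 := Real.Gamma_pos_of_pos (show (0:ℝ) < (d : ℝ) / 2 + 1 by positivity)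
  have : Real.pi ^ ((d:ℝ)/2) = √Real.pi ^ d := by
    rw [Real.sqrt_eq_rpow, ← Real.rpow_natCast, ← Real.rpow_mul Real.pi_pos.le]
    congr 1; ring
  unfold Cd Vd
  rw [this, add_comm 1]
  have := Real.pi_pos
  field_simp

/-- `GoodPack d s p`: balls of radius `s` around points of a lattice with minimum at least one
cover each point at most `p` times, in volume form. -/
def GoodPack (d : ℕ) (s : ℝ) (p : ℕ) : Prop :=
  ∀ N : Matrix (Fin d) (Fin d) ℝ, N.det ≠ 0 →
    (∀ k : Fin d → ℤ, k ≠ 0 → 1 ≤ ‖(WithLp.toLp 2 (N.mulVec (fun j => (k j : ℝ))) : Euc d)‖) →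
    s ^ d * Vd d ≤ p * |N.det|

theorem pack_real {d : ℕ} (hd : 1 ≤ d) (N : Matrix (Fin d) (Fin d) ℝ) (hN : N.det ≠ 0)
    (s : ℝ) (hs : 0 ≤ s) (p : ℕ)
    (hcov : ∀ x : Euc d, ∀ F : Finset (Fin d → ℤ),
      (∀ k ∈ F, ‖WithLp.toLp 2 (N.mulVec (fun j => (k j : ℝ))) + x‖ < s) → F.card ≤ p) :
    s ^ d * Vd d ≤ p * |N.det| := by
  have : Nonempty (Fin d) := ⟨⟨0, hd⟩⟩
  have h := pack_volume N hN s p hcov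
  rw [EuclideanSpace.volume_ball, Fintype.card_fin, ← ENNReal.ofReal_pow hs,
    ← ENNReal.ofReal_mul (by positivity), ← ENNReal.ofReal_natCast p,
    ← ENNReal.ofReal_mul (by positivity), ENNReal.ofReal_le_ofReal_iff (by positivity)] at h
  exact h

theorem mulVec_diff {d : ℕ} (N : Matrix (Fin d) (Fin d) ℝ) (x : Euc d) (a b : Fin d → ℤ) :
    (WithLp.toLp 2 (N.mulVec (fun j => ((a - b) j : ℝ))) : Euc d) =
      (WithLp.toLp 2 (N.mulVec (fun j => (a j : ℝ))) + x) -
      (WithLp.toLp 2 (N.mulVec (fun j => (b j : ℝ))) + x) := by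
  have : (fun j => ((a - b) j : ℝ)) = (fun j => (a j : ℝ)) - (fun j => (b j : ℝ)) := by
    ext j; simp
  rw [this, Matrix.mulVec_sub, WithLp.toLp_sub]; abel

theorem goodPack_one {d : ℕ} (hd : 1 ≤ d) : GoodPack d (1/2) 1 := by
  intro N hN h
  refine pack_real hd N hN _ (by norm_num) 1 ?_
  intro x F hF
  rw [Finset.card_le_one]
  intro a ha b hb
  by_contra hab
  have h1 := h (a - b) (sub_ne_zero.mpr hab)
  rw [mulVec_diff N x] at h1
  have h2 := norm_sub_le (WithLp.toLp 2 (N.mulVec (fun j => (a j : ℝ))) + x)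
      (WithLp.toLp 2 (N.mulVec (fun j => (b j : ℝ))) + x)
  linarith [hF a ha, hF b hb]

theorem goodPack_two {d : ℕ} (hd : 1 ≤ d) : GoodPack d (√(1/3)) 2 := by
  intro N hN h
  refine pack_real hd N hN _ (by positivity) 2 ?_
  intro x F hF
  by_contra hlt
  push Not at hlt
  obtain ⟨a, b, c, ha, hb, hc, hab, hac, hbc⟩ := Finset.two_lt_card_iff.mp hlt
  have h1 := h (a - b) (sub_ne_zero.mpr hab)
  have h2 := h (a - c) (sub_ne_zero.mpr hac)
  have h3 := h (b - c) (sub_ne_zero.mpr hbc)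
  rw [mulVec_diff N x] at h1 h2 h3
  have ka := hF a ha
  have kb := hF b hb
  have kc := hF c hc
  set u := (WithLp.toLp 2 (N.mulVec (fun j => (a j : ℝ))) + x)
  set v := (WithLp.toLp 2 (N.mulVec (fun j => (b j : ℝ))) + x)
  set w := (WithLp.toLp 2 (N.mulVec (fun j => (c j : ℝ))) + x)
  clear_value u v w
  have key : ∀ z : Euc d, ‖z‖ < √(1/3) → ‖z‖^2 < 1/3 := by
    intro z hz
    exact (Real.lt_sqrt (norm_nonneg z)).mp hz
  have key2 : ∀ z : Euc d, 1 ≤ ‖z‖ → 1 ≤ ‖z‖^2 := fun z hz => one_le_pow₀ hz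
  have h1 := key2 _ h1
  have h2 := key2 _ h2
  have h3 := key2 _ h3
  have ka := key _ ka
  have kb := key _ kb
  have kc := key _ kc
  rw [norm_sub_sq_real] at h1 h2 h3
  have h4 := sq_nonneg ‖u + v + w‖
  rw [norm_add_sq_real, norm_add_sq_real, inner_add_left] at h4
  linarith

theorem span_of_gt {d : ℕ} (hd : 1 ≤ d) {s : ℝ} {p : ℕ} (hp : GoodPack d s p)
    {Λ : Set (Euc d)} {T : Matrix (Fin d) (Fin d) ℝ} (hT : IsLatticeOf Λ T)
    {l M : ℝ} (hl : 0 < l) (hM : 0 < M) (hmin : ∀ v ∈ Λ, v ≠ 0 → l ≤ ‖v‖)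
    (hgt : p * |T.det| < s ^ d * Vd d * (M * l ^ (d - 1))) :
    Submodule.span ℝ (Λ ∩ {v | ‖v‖ < M}) = ⊤ := by
  classical
  by_contra hne
  set W := Submodule.span ℝ (Λ ∩ {v | ‖v‖ < M}) with hW
  have hWo : Wᗮ ≠ ⊥ := fun h => hne (Submodule.orthogonal_eq_bot_iff.mp h)
  obtain ⟨n0, hn0W, hn0⟩ := Submodule.exists_mem_ne_zero_of_ne_bot hWo
  let n : Euc d := (‖n0‖)⁻¹ • n0
  have hn1 : ‖n‖ = 1 := by
    simp only [n, norm_smul, norm_inv, norm_norm]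
    exact inv_mul_cancel₀ (norm_ne_zero_iff.mpr hn0)
  have hnW : ∀ w ∈ W, ⟪n, w⟫ = 0 := by
    intro w hw
    rw [real_inner_comm]
    exact (Wᗮ.smul_mem _ hn0W) w hw
  clear_value n
  have hnn : ⟪n, n⟫ = 1 := by rw [real_inner_self_eq_norm_sq, hn1]; norm_num
  have hlM : ∀ v ∈ Λ, v ≠ 0 → ⟪n, v⟫ ≠ 0 → M ≤ ‖v‖ := by
    intro v hv _ hnv
    by_contra hlt
    push Not at hlt
    exact hnv (hnW v (Submodule.subset_span ⟨hv, hlt⟩))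
  let A : Matrix (Fin d) (Fin d) ℝ :=
    l⁻¹ • (1 + Matrix.replicateCol Unit ((l / M - 1) • n.ofLp) * Matrix.replicateRow Unit n.ofLp)
  have hdotn : ∀ v : Euc d, n.ofLp ⬝ᵥ v.ofLp = ⟪n, v⟫ := by
    intro v
    rw [EuclideanSpace.inner_eq_star_dotProduct, dotProduct_comm]; simp
  have hAdet : A.det = (M * l ^ (d-1))⁻¹ := by
    simp only [A]
    rw [Matrix.det_smul, Matrix.det_one_add_replicateCol_mul_replicateRow, Fintype.card_fin,
      dotProduct_smul, hdotn, hnn]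
    obtain ⟨e, rfl⟩ : ∃ e, d = e + 1 := ⟨d - 1, by omega⟩
    simp only [smul_eq_mul, mul_one, add_sub_cancel, Nat.add_sub_cancel]
    rw [pow_succ, inv_pow]
    field_simp
  have hAv : ∀ v : Euc d, (WithLp.toLp 2 (A.mulVec v.ofLp) : Euc d) =
      l⁻¹ • (v - ⟪n, v⟫ • n) + (⟪n, v⟫ / M) • n := by
    intro v
    have : A.mulVec v.ofLp = l⁻¹ • (v.ofLp + ⟪n, v⟫ • ((l / M - 1) • n.ofLp)) := by
      simp only [A]
      rw [Matrix.smul_mulVec, Matrix.add_mulVec, Matrix.one_mulVec, ← Matrix.mulVec_mulVec]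
      congr 2
      ext i
      simp only [Matrix.mulVec, dotProduct, Matrix.replicateCol_apply, Matrix.replicateRow_apply,
        Pi.smul_apply, smul_eq_mul, Finset.univ_unique, Finset.sum_singleton]
      have := hdotn v
      simp only [dotProduct] at this
      rw [this]; ring
    rw [this]
    ext i
    simp
    field_simp
    ring
  have hnorm : ∀ v : Euc d, ‖(WithLp.toLp 2 (A.mulVec v.ofLp) : Euc d)‖^2 =
      ‖v - ⟪n, v⟫ • n‖^2 / l^2 + ⟪n, v⟫^2 / M^2 := by
    intro v
    rw [hAv, norm_add_sq_real, inner_smul_left, inner_smul_right, inner_sub_left, inner_smul_left,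
      hnn, norm_smul, norm_smul, hn1, real_inner_comm n v]
    simp [mul_pow, div_pow]
    field_simp
  have hdecomp : ∀ v : Euc d, ‖v‖^2 = ‖v - ⟪n, v⟫ • n‖^2 + ⟪n, v⟫^2 := by
    intro v
    rw [norm_sub_sq_real, inner_smul_right, real_inner_comm n v, norm_smul, hn1]
    simp
    ring
  have hTd : T.det ≠ 0 := hT.1.ne_zero
  have hMl : 0 < M * l ^ (d-1) := by positivity
  have hfin := hp (A * T) (by
    rw [Matrix.det_mul, hAdet]; exact mul_ne_zero (inv_ne_zero hMl.ne') hTd) (by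
    intro k hk
    let v : Euc d := WithLp.toLp 2 (T.mulVec (fun j => (k j : ℝ)))
    have hv : v ∈ Λ := by
      rw [hT.2]
      exact ⟨k, fun i => rfl⟩
    have hv0 : v ≠ 0 := by
      intro h0
      have h0' : T.mulVec (fun j => (k j : ℝ)) = 0 := by
        have := congrArg WithLp.ofLp h0
        simpa [v] using this
      have := Matrix.eq_zero_of_mulVec_eq_zero hTd h0'
      apply hk
      ext j
      have := congrFun this j
      simpa using this
    rw [← Matrix.mulVec_mulVec]
    change 1 ≤ ‖(WithLp.toLp 2 (A.mulVec v.ofLp) : Euc d)‖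
    have h1 : 1 ≤ ‖(WithLp.toLp 2 (A.mulVec v.ofLp) : Euc d)‖^2 := by
      have hlv : l^2 ≤ ‖v‖^2 := by have := hmin v hv hv0; gcongr
      rw [hnorm]
      by_cases hnv : ⟪n, v⟫ = 0
      · rw [hdecomp, hnv] at hlv
        rw [hnv]
        have : 1 ≤ ‖v - (0:ℝ) • n‖ ^ 2 / l ^ 2 := by
          rw [le_div_iff₀ (by positivity)]; linarith
        simpa using this
      · have hMv : M^2 ≤ ‖v‖^2 := by have := hlM v hv hv0 hnv; gcongr
        rw [hdecomp] at hMv hlv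
        rcases le_total l M with hc | hc
        · have : ‖v - ⟪n, v⟫ • n‖ ^ 2 / M ^ 2 ≤ ‖v - ⟪n, v⟫ • n‖ ^ 2 / l ^ 2 := by gcongr
          refine le_trans ?_ (add_le_add_left this _)
          rw [← add_div, le_div_iff₀ (by positivity)]; linarith
        · have : ⟪n, v⟫ ^ 2 / l ^ 2 ≤ ⟪n, v⟫ ^ 2 / M ^ 2 := by gcongr
          refine le_trans ?_ (add_le_add_right this _)
          rw [← add_div, le_div_iff₀ (by positivity)]; linarith
    exact (one_le_sq_iff₀ (norm_nonneg _)).mp h1)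
  rw [Matrix.det_mul, hAdet, abs_mul, abs_inv, abs_of_pos hMl] at hfin
  have h5 : (p : ℝ) * ((M * l ^ (d - 1))⁻¹ * |T.det|) = (p * |T.det|) / (M * l ^ (d - 1)) := by
    field_simp
  rw [h5, le_div_iff₀ hMl] at hfin
  linarith

open scoped Matrix

theorem mem_lat_iff {d : ℕ} {Λ : Set (Euc d)} {T : Matrix (Fin d) (Fin d) ℝ}
    (hT : IsLatticeOf Λ T) (v : Euc d) :
    v ∈ Λ ↔ ∃ k : Fin d → ℤ, v.ofLp = T.mulVec (fun j => (k j : ℝ)) := by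
  rw [hT.2]
  constructor
  · rintro ⟨k, hk⟩
    exact ⟨k, funext hk⟩
  · rintro ⟨k, hk⟩
    exact ⟨k, fun i => congrFun hk i⟩

theorem inner_dot {d : ℕ} (x y : Euc d) : ⟪x, y⟫ = x.ofLp ⬝ᵥ y.ofLp := by
  rw [EuclideanSpace.inner_eq_star_dotProduct, dotProduct_comm]; simp

theorem dual_isLattice {d : ℕ} {Λ : Set (Euc d)} {T : Matrix (Fin d) (Fin d) ℝ}
    (hT : IsLatticeOf Λ T) : IsLatticeOf (dualLat Λ) (T⁻¹)ᵀ := by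
  have hTi : T⁻¹ * T = 1 := Matrix.nonsing_inv_mul T hT.1
  have hTi' : T * T⁻¹ = 1 := Matrix.mul_nonsing_inv T hT.1
  refine ⟨?_, ?_⟩
  · rw [Matrix.det_transpose]
    exact (Matrix.isUnit_nonsing_inv_det T hT.1)
  · ext y
    constructor
    · intro hy
      have h1 : ∀ j, ∃ n : ℤ, T.col j ⬝ᵥ y.ofLp = n := by
        intro j
        obtain ⟨n, hn⟩ := hy (WithLp.toLp 2 (T.col j)) ((mem_lat_iff hT _).mpr
          ⟨Pi.single j 1, by
            ext i
            simp [Matrix.mulVec, dotProduct, Pi.single_apply]⟩)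
        exact ⟨n, by rw [← hn, inner_dot]⟩
      choose n hn using h1
      refine ⟨n, fun i => ?_⟩
      have h2 : Tᵀ.mulVec y.ofLp = fun j => (n j : ℝ) := by
        ext j
        rw [← hn j]; rfl
      have h3 : y.ofLp = (T⁻¹)ᵀ.mulVec (fun j => (n j : ℝ)) := by
        rw [← h2, Matrix.mulVec_mulVec, ← Matrix.transpose_mul, hTi', Matrix.transpose_one,
          Matrix.one_mulVec]
      exact congrFun h3 i
    · rintro ⟨k, hk⟩ x hx
      obtain ⟨m, hm⟩ := (mem_lat_iff hT x).mp hx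
      have hk' : y.ofLp = (T⁻¹)ᵀ.mulVec (fun j => (k j : ℝ)) := funext hk
      refine ⟨∑ j, m j * k j, ?_⟩
      rw [inner_dot, hm, hk', Matrix.mulVec_transpose, dotProduct_comm,
        ← Matrix.dotProduct_mulVec, Matrix.mulVec_mulVec, hTi, Matrix.one_mulVec]
      simp [dotProduct, mul_comm]

theorem dual_dual {d : ℕ} {Λ : Set (Euc d)} {T : Matrix (Fin d) (Fin d) ℝ}
    (hT : IsLatticeOf Λ T) : dualLat (dualLat Λ) = Λ := by
  have h := (dual_isLattice (dual_isLattice hT)).2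
  rw [h, hT.2]
  have : ((T⁻¹)ᵀ⁻¹)ᵀ = T := by
    rw [← Matrix.transpose_nonsing_inv, Matrix.transpose_transpose,
      Matrix.nonsing_inv_nonsing_inv T hT.1]
  rw [this]

theorem lat_subgroup {d : ℕ} {Λ : Set (Euc d)} {T : Matrix (Fin d) (Fin d) ℝ}
    (hT : IsLatticeOf Λ T) : ∃ S : AddSubgroup (Euc d), ∀ v, v ∈ S ↔ v ∈ Λ := by
  refine ⟨{ carrier := Λ, add_mem' := ?_, zero_mem' := ?_, neg_mem' := ?_ }, fun v => Iff.rfl⟩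
  · intro a b ha hb
    obtain ⟨k, hk⟩ := (mem_lat_iff hT a).mp ha
    obtain ⟨m, hm⟩ := (mem_lat_iff hT b).mp hb
    refine (mem_lat_iff hT _).mpr ⟨k + m, ?_⟩
    rw [WithLp.ofLp_add, hk, hm, ← Matrix.mulVec_add]
    congr 1; ext j; simp
  · exact (mem_lat_iff hT _).mpr ⟨0, by
      have : (fun j : Fin d => (((0 : Fin d → ℤ) j : ℤ) : ℝ)) = 0 := by ext j; simp
      rw [this]; simp⟩
  · intro a ha
    obtain ⟨k, hk⟩ := (mem_lat_iff hT a).mp ha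
    refine (mem_lat_iff hT _).mpr ⟨-k, ?_⟩
    rw [WithLp.ofLp_neg, hk, ← Matrix.mulVec_neg]
    congr 1; ext j; simp

theorem lat_separated {d : ℕ} {Λ : Set (Euc d)} {T : Matrix (Fin d) (Fin d) ℝ}
    (hT : IsLatticeOf Λ T) : ∃ δ : ℝ, 0 < δ ∧ ∀ v ∈ Λ, v ≠ 0 → δ ≤ ‖v‖ := by
  have hTi : T⁻¹ * T = 1 := Matrix.nonsing_inv_mul T hT.1
  let r : Fin d → Euc d := fun i => WithLp.toLp 2 (T⁻¹ i)
  have hsum : 0 ≤ ∑ i, ‖r i‖ := Finset.sum_nonneg fun i _ => norm_nonneg _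
  have hpos : 0 < 1 + ∑ i, ‖r i‖ := by linarith
  refine ⟨1 / (1 + ∑ i, ‖r i‖), by positivity, ?_⟩
  intro v hv hv0
  obtain ⟨k, hk⟩ := (mem_lat_iff hT v).mp hv
  have h1 : T⁻¹.mulVec v.ofLp = fun j => (k j : ℝ) := by
    rw [hk, Matrix.mulVec_mulVec, hTi, Matrix.one_mulVec]
  have hk0 : ∃ i, k i ≠ 0 := by
    by_contra hall
    push Not at hall
    apply hv0
    have : (fun j => (k j : ℝ)) = 0 := by ext j; simp [hall j]
    rw [this, Matrix.mulVec_zero] at hk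
    ext i
    exact congrFun hk i
  obtain ⟨i, hi⟩ := hk0
  have h2 : ⟪r i, v⟫ = k i := by
    rw [inner_dot]; exact congrFun h1 i
  have h3 : (1:ℝ) ≤ |(k i : ℝ)| := by
    exact_mod_cast Int.one_le_abs hi
  have h4 := abs_real_inner_le_norm (r i) v
  rw [h2] at h4
  have h5 : ‖r i‖ ≤ ∑ i, ‖r i‖ :=
    Finset.single_le_sum (f := fun i => ‖r i‖) (fun i _ => norm_nonneg _) (Finset.mem_univ i)
  rw [div_le_iff₀ hpos]
  nlinarith [norm_nonneg v]

theorem lat_shortest {d : ℕ} (hd : 1 ≤ d) {Λ : Set (Euc d)} {T : Matrix (Fin d) (Fin d) ℝ}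
    (hT : IsLatticeOf Λ T) : ∃ v0 ∈ Λ, v0 ≠ 0 ∧ ∀ v ∈ Λ, v ≠ 0 → ‖v0‖ ≤ ‖v‖ := by
  obtain ⟨S, hS⟩ := lat_subgroup hT
  obtain ⟨δ, hδ, hsep⟩ := lat_separated hT
  have := exists_shortest S hδ (fun v hv => hsep v ((hS v).mp hv)) (by
    let k : Fin d → ℤ := fun _ => 1
    refine ⟨WithLp.toLp 2 (T.mulVec (fun j => (k j : ℝ))), (hS _).mpr ((mem_lat_iff hT _).mpr
      ⟨k, rfl⟩), ?_⟩
    intro h0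
    have h0' : T.mulVec (fun j => (k j : ℝ)) = 0 := by
      have := congrArg WithLp.ofLp h0
      simpa using this
    have := congrFun (Matrix.eq_zero_of_mulVec_eq_zero hT.1.ne_zero h0') ⟨0, hd⟩
    simp [k] at this)
  simpa only [hS] using this

theorem succMin_eq {d : ℕ} {Λ : Set (Euc d)} {v0 : Euc d} (h0 : v0 ∈ Λ) (hne : v0 ≠ 0)
    (hmin : ∀ v ∈ Λ, v ≠ 0 → ‖v0‖ ≤ ‖v‖) : succMin Λ 1 = ‖v0‖ := by
  have hpos : 0 < ‖v0‖ := norm_pos_iff.mpr hne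
  have : { r : ℝ | 0 < r ∧
    1 ≤ Module.finrank ℝ (Submodule.span ℝ (Λ ∩ Metric.closedBall (0 : Euc d) r)) } =
      Set.Ici ‖v0‖ := by
    ext r
    simp only [Set.mem_ofPred_eq, Set.mem_Ici]
    constructor
    · rintro ⟨hr, h1⟩
      by_contra hlt
      push Not at hlt
      have hb : Submodule.span ℝ (Λ ∩ Metric.closedBall (0 : Euc d) r) = ⊥ := by
        rw [Submodule.span_eq_bot]
        rintro v ⟨hv, hvr⟩
        by_contra hv0
        have := hmin v hv hv0
        have h2 : ‖v‖ ≤ r := by simpa using hvr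
        linarith
      rw [hb] at h1
      simp at h1
    · intro hr
      refine ⟨by linarith, ?_⟩
      rw [Nat.one_le_iff_ne_zero]
      intro h
      have hb := Submodule.finrank_eq_zero.mp h
      rw [Submodule.span_eq_bot] at hb
      exact hne (hb v0 ⟨h0, by simpa using hr⟩)
  rw [succMin, this, csInf_Ici]

theorem sepRad_eq {d : ℕ} {Λ : Set (Euc d)} {v0 : Euc d} (h0 : v0 ∈ Λ) (hne : v0 ≠ 0)
    (hmin : ∀ v ∈ Λ, v ≠ 0 → ‖v0‖ ≤ ‖v‖) : sepRad Λ = (1/2) * ‖v0‖ := by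
  have : IsLeast (Set.image norm (Λ \ {0})) ‖v0‖ := by
    refine ⟨⟨v0, ⟨h0, by simpa using hne⟩, rfl⟩, ?_⟩
    rintro _ ⟨v, ⟨hv, hv0⟩, rfl⟩
    exact hmin v hv (by simpa using hv0)
  rw [sepRad, this.csInf_eq]

theorem covRad_le {d : ℕ} {Λ : Set (Euc d)} {R : ℝ} (h : ∀ x : Euc d, ∃ u ∈ Λ, ‖x - u‖ ≤ R) :
    covRad Λ ≤ R := by
  apply ciSup_le
  intro x
  obtain ⟨u, hu, hxu⟩ := h x
  refine le_trans (csInf_le ⟨0, ?_⟩ ⟨u, hu, rfl⟩) (by rwa [dist_eq_norm])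
  rintro _ ⟨v, _, rfl⟩
  exact dist_nonneg

theorem covRad_le_of_span {d : ℕ} {Λ : Set (Euc d)} {T : Matrix (Fin d) (Fin d) ℝ}
    (hT : IsLatticeOf Λ T) {M : ℝ} (hM : 0 < M)
    (hspan : Submodule.span ℝ (Λ ∩ {v | ‖v‖ < M}) = ⊤) : covRad Λ ≤ √d * M / 2 := by
  obtain ⟨S, hS⟩ := lat_subgroup hT
  obtain ⟨b, hb, hbspan, hli⟩ := exists_linearIndependent ℝ (Λ ∩ {v : Euc d | ‖v‖ < M})
  have hfin : b.Finite := hli.setFinite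
  let F := hfin.toFinset
  have hFb : (F : Set (Euc d)) = b := hfin.coe_toFinset
  have hcard : F.card ≤ d := by
    have h1 : LinearIndependent ℝ (fun x : F => (x : Euc d)) := by
      have : LinearIndepOn ℝ id (F : Set (Euc d)) := by rw [hFb]; exact hli
      exact this
    have h2 := h1.fintype_card_le_finrank
    simpa using h2
  apply covRad_le
  intro x
  obtain ⟨u, hu, -, hxu⟩ := babai_aux S M F (by
    intro v hv
    have : v ∈ b := by rw [← hFb]; exact hv
    exact ⟨(hS v).mpr (hb this).1, (hb this).2.le⟩) x (by
      rw [hFb, hbspan, hspan]; trivial)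
  refine ⟨u, (hS u).mp hu, ?_⟩
  refine (sq_le_sq₀ (by positivity) (by positivity)).mp ?_
  have : (√d * M / 2)^2 = d * (M^2/4) := by
    rw [div_pow, mul_pow, Real.sq_sqrt (by positivity)]; ring
  rw [this]
  refine hxu.trans ?_
  have : (F.card : ℝ) ≤ d := by exact_mod_cast hcard
  gcongr

theorem covRad_le_dual {d : ℕ} {Λ : Set (Euc d)} {T : Matrix (Fin d) (Fin d) ℝ}
    (hT : IsLatticeOf Λ T) {μ : ℝ} (hμ : 0 < μ) (hmin : ∀ v ∈ dualLat Λ, v ≠ 0 → μ ≤ ‖v‖) :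
    covRad Λ ≤ √((3 / 4) * ((4 / 3) ^ d - 1)) / μ := by
  obtain ⟨S, hS⟩ := lat_subgroup (dual_isLattice hT)
  apply covRad_le
  intro x
  obtain ⟨e, -, he, hInteg⟩ := transference_aux (E := Euc d) (G := S) d ⊤ (by simp) S.subtype
    ((innerₛₗ ℝ x).toAddMonoidHom.comp S.subtype) μ hμ (fun _ => trivial)
    (fun g hg => hmin g ((hS _).mp g.2) hg) (by
      intro g hg
      refine ⟨0, ?_⟩
      have : (g : Euc d) = 0 := hg
      simp [this])
  refine ⟨x - e, ?_, ?_⟩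
  · rw [← dual_dual hT]
    intro y hy
    obtain ⟨k, hk⟩ := hInteg ⟨y, (hS y).mpr hy⟩
    refine ⟨-k, ?_⟩
    have hk' : ⟪e, y⟫ - ⟪x, y⟫ = k := hk
    rw [real_inner_comm, inner_sub_left]
    push_cast
    linarith
  · rw [sub_sub_cancel, le_div_iff₀ hμ]
    apply Real.le_sqrt_of_sq_le
    rw [le_div_iff₀ (by positivity)] at he
    rw [mul_pow]; exact he

theorem inv_min_le {d : ℕ} (hd : 1 ≤ d) {s : ℝ} (hs : 0 < s) {p : ℕ} (hp : GoodPack d s p)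
    {Λ : Set (Euc d)} {T : Matrix (Fin d) (Fin d) ℝ} (hT : IsLatticeOf Λ T)
    {μ : ℝ} (hμ : 0 < μ) (hmin : ∀ v ∈ dualLat Λ, v ≠ 0 → μ ≤ ‖v‖)
    {v0 : Euc d} (h0 : v0 ∈ Λ) (hne : v0 ≠ 0) :
    1 / ‖v0‖ ≤ p * |T⁻¹.det| / (s ^ d * Vd d * μ ^ (d - 1)) := by
  have hV := Vd_pos d
  have hpos : 0 < ‖v0‖ := norm_pos_iff.mpr hne
  apply le_of_forall_gt_imp_ge_of_dense
  intro M hM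
  have hM0 : 0 < M := lt_of_le_of_lt (by positivity) hM
  rw [div_lt_iff₀ (by positivity)] at hM
  have hspan := span_of_gt hd hp (dual_isLattice hT) hμ hM0 hmin (by
    rw [Matrix.det_transpose]; linarith)
  have : ∃ w ∈ dualLat Λ, ‖w‖ < M ∧ ⟪v0, w⟫ ≠ 0 := by
    by_contra hall
    push Not at hall
    have hle : Submodule.span ℝ (dualLat Λ ∩ {v | ‖v‖ < M}) ≤ (innerₛₗ ℝ v0).ker := by
      rw [Submodule.span_le]
      rintro w ⟨hw, hwM⟩
      simpa using hall w hw hwM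
    rw [hspan] at hle
    have : v0 ∈ (innerₛₗ ℝ v0).ker := hle trivial
    simp only [LinearMap.mem_ker, innerₛₗ_apply_apply] at this
    exact hne (inner_self_eq_zero.mp this)
  obtain ⟨w, hw, hwM, hvw⟩ := this
  obtain ⟨n, hn⟩ := hw v0 h0
  have hn0 : n ≠ 0 := by rintro rfl; simp at hn; exact hvw hn
  have h3 : (1:ℝ) ≤ |(n : ℝ)| := by exact_mod_cast Int.one_le_abs hn0
  have h4 := abs_real_inner_le_norm v0 w
  rw [hn] at h4
  rw [div_le_iff₀ hpos]
  nlinarith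

theorem numeric_choice {d : ℕ} (hd : 1 ≤ d) : ∃ (s : ℝ) (p : ℕ), 0 < s ∧ GoodPack d s p ∧
    2 * √((3 / 4) * ((4 / 3) ^ d - 1)) * p ≤ d * (2 * s) ^ d := by
  rcases Nat.lt_or_ge d 4 with h | h
  · refine ⟨1/2, 1, by norm_num, goodPack_one hd, ?_⟩
    have : √((3 / 4 : ℝ) * ((4 / 3) ^ d - 1)) ≤ (d : ℝ) / 2 := by
      apply Real.sqrt_le_iff.mpr
      refine ⟨by positivity, ?_⟩
      interval_cases d <;> norm_num
    rw [show (2 * (1/2) : ℝ) = 1 by norm_num, one_pow, mul_one]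
    push_cast
    linarith
  · refine ⟨√(1/3), 2, by positivity, goodPack_two hd, ?_⟩
    refine (sq_le_sq₀ (by positivity) (by positivity)).mp ?_
    have hq : (1:ℝ) ≤ (4/3)^d := one_le_pow₀ (by norm_num)
    have e1 : ((d:ℝ) * (2 * √(1/3)) ^ d)^2 = d^2 * (4/3)^d := by
      rw [mul_pow, ← pow_mul, mul_comm d 2, pow_mul, mul_pow, Real.sq_sqrt (by norm_num)]
      norm_num
    rw [e1, mul_pow, mul_pow, Real.sq_sqrt (by linarith)]
    have h4 : (16:ℝ) ≤ d^2 := by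
      have : (4:ℝ) ≤ d := by exact_mod_cast h
      nlinarith
    push_cast
    nlinarith

theorem stmt0 {d : ℕ} (hd : 1 ≤ d) (Λ : Set (Euc d)) (T : Matrix (Fin d) (Fin d) ℝ)
    (hT : IsLatticeOf Λ T) :
    meshRatio Λ ≤ Cd d * min
      (Real.sqrt d * |T.det| / (succMin Λ 1) ^ d)
      (d * |T⁻¹.det| / (succMin (dualLat Λ) 1) ^ d) := by
  obtain ⟨v0, hv0, hv0ne, hv0min⟩ := lat_shortest hd hT
  obtain ⟨w0, hw0, hw0ne, hw0min⟩ := lat_shortest hd (dual_isLattice hT)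
  rw [succMin_eq hv0 hv0ne hv0min, succMin_eq hw0 hw0ne hw0min]
  have hl : 0 < ‖v0‖ := norm_pos_iff.mpr hv0ne
  have hμ : 0 < ‖w0‖ := norm_pos_iff.mpr hw0ne
  have hV := Vd_pos d
  have hmesh : meshRatio Λ = 2 * covRad Λ * (1 / ‖v0‖) := by
    rw [meshRatio, sepRad_eq hv0 hv0ne hv0min]; field_simp
  have hpw : ∀ r : ℝ, r ^ d = r * r ^ (d - 1) := by
    intro r
    obtain ⟨e, rfl⟩ : ∃ e, d = e + 1 := ⟨d - 1, by omega⟩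
    rw [Nat.add_sub_cancel, pow_succ]; ring
  rw [Cd_eq, hmesh]
  rcases min_choice (Real.sqrt d * |T.det| / ‖v0‖ ^ d) (d * |T⁻¹.det| / ‖w0‖ ^ d) with hm | hm
  · rw [hm]
    have hcov : covRad Λ ≤ √d / 2 * (2 ^ d * |T.det| / (Vd d * ‖v0‖ ^ (d - 1))) := by
      have hsd : 0 < √(d:ℝ) := Real.sqrt_pos.mpr (by exact_mod_cast hd)
      rw [← div_le_iff₀' (by positivity)]
      apply le_of_forall_gt_imp_ge_of_dense
      intro M hM
      have hM0 : 0 < M := lt_of_le_of_lt (by positivity) hM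
      rw [div_lt_iff₀ (by positivity)] at hM
      have hspan := span_of_gt hd (goodPack_one hd) hT hl hM0 hv0min (by
        rw [one_div, inv_pow, inv_mul_eq_div, div_mul_eq_mul_div, lt_div_iff₀ (by positivity)]
        push_cast
        linarith)
      have := covRad_le_of_span hT hM0 hspan
      rw [div_le_iff₀' (by positivity)]
      linarith
    calc 2 * covRad Λ * (1 / ‖v0‖)
        ≤ 2 * (√d / 2 * (2 ^ d * |T.det| / (Vd d * ‖v0‖ ^ (d - 1)))) * (1 / ‖v0‖) := by gcongr
      _ = _ := by rw [hpw ‖v0‖]; field_simp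
  · rw [hm]
    obtain ⟨s, p, hs, hp, hnum⟩ := numeric_choice hd
    have h1 := covRad_le_dual hT hμ hw0min
    have h2 := inv_min_le hd hs hp hT hμ hw0min hv0 hv0ne
    set H := √((3 / 4 : ℝ) * ((4 / 3) ^ d - 1))
    have hH : 0 ≤ H := Real.sqrt_nonneg _
    have hK : 0 ≤ |T⁻¹.det| / (s ^ d * Vd d * ‖w0‖ ^ d) := by positivity
    calc 2 * covRad Λ * (1 / ‖v0‖)
        ≤ 2 * (H / ‖w0‖) * (p * |T⁻¹.det| / (s ^ d * Vd d * ‖w0‖ ^ (d - 1))) := by gcongr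
      _ = (2 * H * p) * (|T⁻¹.det| / (s ^ d * Vd d * ‖w0‖ ^ d)) := by
          rw [hpw ‖w0‖]; field_simp
      _ ≤ (d * (2 * s) ^ d) * (|T⁻¹.det| / (s ^ d * Vd d * ‖w0‖ ^ d)) := by gcongr
      _ = _ := by rw [mul_pow]; field_simp

end
end

section
/- Let d ≥ 1 and let Λ ⊂ ℝ^d be a full-rank lattice with dual lattice Λ⊥. Then the mesh ratio of Λ satisfies max( λ_d(Λ)/λ₁(Λ) , d⁻¹ · λ_d(Λ⊥)/λ₁(Λ⊥) ) ≤ ρ(Λ) ≤ min( √d · λ_d(Λ)/λ₁(Λ) , d · λ_d(Λ⊥)/λ₁(Λ⊥) ). -/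
open scoped RealInnerProductSpace

noncomputable section

/-- cast of an integer vector -/
def ic {d : ℕ} (k : Fin d → ℤ) : Fin d → ℝ := fun i => (k i : ℝ)

lemma ic_zero {d : ℕ} : ic (0 : Fin d → ℤ) = 0 := by
  ext i; simp [ic]

lemma ic_add {d : ℕ} (k l : Fin d → ℤ) : ic (k + l) = ic k + ic l := by
  ext i; simp [ic]

lemma ic_sub {d : ℕ} (k l : Fin d → ℤ) : ic (k - l) = ic k - ic l := by
  ext i; simp [ic]

lemma summable_int_gauss {c : ℝ} (hc : 0 < c) :
    Summable (fun n : ℤ => Real.exp (-c * (n : ℝ) ^ 2)) := by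
  have h := (hasSum_jacobiTheta₂_term 0 (τ := (c / Real.pi : ℝ) * Complex.I)
    (by simp; positivity)).summable.norm
  refine h.congr fun n => ?_
  rw [jacobiTheta₂_term, Complex.norm_exp]
  congr 1
  simp [pow_two]
  field_simp

lemma summable_prod_gauss {c : ℝ} (hc : 0 < c) (d : ℕ) :
    Summable (fun k : Fin d → ℤ => Real.exp (-c * ∑ i, (k i : ℝ) ^ 2)) := by
  induction d with
  | zero => exact Summable.of_finite
  | succ n ih =>
    rw [← (Fin.consEquiv (fun _ : Fin (n + 1) => ℤ)).summable_iff]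
    have := (summable_int_gauss hc).mul_of_nonneg ih (fun _ => (Real.exp_pos _).le)
      (fun _ => (Real.exp_pos _).le)
    refine this.congr fun x => ?_
    simp [Fin.sum_univ_succ, Fin.consEquiv, ← Real.exp_add]
    ring

lemma summable_gauss {d : ℕ} (A : (Fin d → ℝ) ≃L[ℝ] Euc d) {c : ℝ} (hc : 0 < c) :
    Summable (fun k : Fin d → ℤ => Real.exp (-c * ‖A (ic k)‖ ^ 2)) := by
  let e : Euc d ≃L[ℝ] (Fin d → ℝ) := PiLp.continuousLinearEquiv 2 ℝ (fun _ : Fin d => ℝ)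
  let M : Euc d →L[ℝ] Euc d :=
    e.symm.toContinuousLinearMap.comp A.symm.toContinuousLinearMap
  have hM : ∀ v : Fin d → ℝ, ∑ i, (v i) ^ 2 ≤ (‖M‖ + 1) ^ 2 * ‖A v‖ ^ 2 := by
    intro v
    have h1 : ‖e.symm v‖ ^ 2 = ∑ i, (v i) ^ 2 := by
      rw [EuclideanSpace.norm_sq_eq]; simp [e]
    have h2 : M (A v) = e.symm v := by simp [M]
    rw [← h1, ← h2, ← mul_pow]
    have := M.le_opNorm (A v)
    gcongr
    nlinarith [norm_nonneg (A v)]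
  have hpos : 0 < (‖M‖ + 1) ^ 2 := by positivity
  refine (summable_prod_gauss (c := c / (‖M‖ + 1) ^ 2) (by positivity) d).of_nonneg_of_le
    (fun _ => (Real.exp_pos _).le) fun k => ?_
  rw [Real.exp_le_exp]
  have := hM (ic k)
  have h3 : (∑ i, ((k i : ℝ)) ^ 2) / (‖M‖ + 1) ^ 2 ≤ ‖A (ic k)‖ ^ 2 := by
    rw [div_le_iff₀ hpos]; simp only [ic] at this ⊢; linarith
  calc -c * ‖A (ic k)‖ ^ 2 ≤ -c * ((∑ i, ((k i : ℝ)) ^ 2) / (‖M‖ + 1) ^ 2) := by nlinarith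
    _ = _ := by ring

lemma gauss_shift_le {d : ℕ} {c : ℝ} (hc : 0 < c) (x y : Euc d) :
    Real.exp (-c * ‖x + y‖ ^ 2) ≤ Real.exp (c * ‖x‖ ^ 2) * Real.exp (-(c / 2) * ‖y‖ ^ 2) := by
  rw [← Real.exp_add, Real.exp_le_exp]
  have h : ‖y‖ ≤ ‖x + y‖ + ‖x‖ := by
    simpa using norm_sub_le (x + y) x
  have : ‖y‖ ^ 2 ≤ 2 * ‖x + y‖ ^ 2 + 2 * ‖x‖ ^ 2 := by
    nlinarith [norm_nonneg y, norm_nonneg x, norm_nonneg (x + y), sq_nonneg (‖x + y‖ - ‖x‖)]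
  nlinarith

lemma summable_gauss_shift {d : ℕ} (A : (Fin d → ℝ) ≃L[ℝ] Euc d) {c : ℝ} (hc : 0 < c) (u : Euc d) :
    Summable (fun k : Fin d → ℤ => Real.exp (-c * ‖u + A (ic k)‖ ^ 2)) :=
  ((summable_gauss A (half_pos hc)).mul_left _).of_nonneg_of_le (fun _ => (Real.exp_pos _).le)
    fun k => gauss_shift_le hc u (A (ic k))

/-- periodization of the Gaussian -/
def perG {d : ℕ} (A : (Fin d → ℝ) ≃L[ℝ] Euc d) (c : ℝ) (v : Fin d → ℝ) : ℂ :=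
  ∑' k : Fin d → ℤ, ((Real.exp (-c * ‖A (v + ic k)‖ ^ 2) : ℝ) : ℂ)

lemma continuous_perG {d : ℕ} (A : (Fin d → ℝ) ≃L[ℝ] Euc d) {c : ℝ} (hc : 0 < c) :
    Continuous (perG A c) := by
  rw [continuous_iff_continuousAt]
  intro v₀
  have hopen : IsOpen {v : Fin d → ℝ | ‖A v‖ < ‖A v₀‖ + 1} :=
    isOpen_lt (by fun_prop) (by fun_prop)
  refine ContinuousOn.continuousAt (s := {v : Fin d → ℝ | ‖A v‖ < ‖A v₀‖ + 1}) ?_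
    (hopen.mem_nhds (by simp))
  refine continuousOn_tsum (u := fun k => Real.exp (c * (‖A v₀‖ + 1) ^ 2) *
    Real.exp (-(c / 2) * ‖A (ic k)‖ ^ 2)) (fun k => ?_)
    ((summable_gauss A (half_pos hc)).mul_left _) ?_
  · apply Continuous.continuousOn
    fun_prop
  · intro k v hv
    rw [Complex.norm_real, Real.norm_of_nonneg (Real.exp_pos _).le, map_add]
    refine (gauss_shift_le hc _ _).trans ?_
    have : ‖A v‖ < ‖A v₀‖ + 1 := hv
    gcongr

lemma perG_periodic {d : ℕ} (A : (Fin d → ℝ) ≃L[ℝ] Euc d) (c : ℝ) (v : Fin d → ℝ)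
    (l : Fin d → ℤ) : perG A c (v + ic l) = perG A c v := by
  unfold perG
  rw [← (Equiv.addLeft l).tsum_eq (fun k => ((Real.exp (-c * ‖A (v + ic k)‖ ^ 2) : ℝ) : ℂ))]
  simp [ic_add, add_assoc]

/-- The projection to the torus. -/
def prT {d : ℕ} : C(Fin d → ℝ, UnitAddTorus (Fin d)) where
  toFun v := fun i => (v i : UnitAddCircle)
  continuous_toFun := by
    refine continuous_pi fun i => ?_
    exact (AddCircle.continuous_mk' 1).comp (continuous_apply i)

lemma prT_quot {d : ℕ} : Topology.IsQuotientMap (prT (d := d)) :=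
  (IsOpenQuotientMap.piMap (fun _ : Fin d =>
    (QuotientAddGroup.isOpenQuotientMap_mk : IsOpenQuotientMap
      (QuotientAddGroup.mk : ℝ → UnitAddCircle)))).isQuotientMap

lemma prT_eq {d : ℕ} {v w : Fin d → ℝ} (h : prT v = prT w) : ∃ l : Fin d → ℤ, w = v + ic l := by
  have h1 : ∀ i, ∃ n : ℤ, w i = v i + n := by
    intro i
    have := congrFun h i
    simp only [prT, ContinuousMap.coe_mk] at this
    rw [QuotientAddGroup.eq] at this
    obtain ⟨n, hn⟩ := AddSubgroup.mem_zmultiples_iff.mp this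
    exact ⟨n, by simp at hn; linarith⟩
  choose l hl using h1
  exact ⟨l, funext hl⟩

/-- periodization on the torus -/
def torG {d : ℕ} (A : (Fin d → ℝ) ≃L[ℝ] Euc d) {c : ℝ} (hc : 0 < c) :
    C(UnitAddTorus (Fin d), ℂ) :=
  (prT_quot (d := d)).lift ⟨perG A c, continuous_perG A hc⟩ (by
    intro v w h
    obtain ⟨l, rfl⟩ := prT_eq h
    exact (perG_periodic A c v l).symm)

lemma torG_apply {d : ℕ} (A : (Fin d → ℝ) ≃L[ℝ] Euc d) {c : ℝ} (hc : 0 < c) (v : Fin d → ℝ) :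
    torG A hc (prT v) = perG A c v := by
  have := Topology.IsQuotientMap.lift_comp (prT_quot (d := d)) ⟨perG A c, continuous_perG A hc⟩ (by
    intro v w h
    obtain ⟨l, rfl⟩ := prT_eq h
    exact (perG_periodic A c v l).symm)
  exact DFunLike.congr_fun this v

lemma mFourier_prT {d : ℕ} (m : Fin d → ℤ) (v : Fin d → ℝ) :
    UnitAddTorus.mFourier m (prT v) = Complex.exp (2 * Real.pi * Complex.I * ((ic m ⬝ᵥ v : ℝ) : ℂ)) := by
  simp only [UnitAddTorus.mFourier, prT, ContinuousMap.coe_mk, fourier_coe_apply]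
  rw [← Complex.exp_sum]
  congr 1
  simp [dotProduct, ic, Finset.mul_sum, mul_assoc]


/-- unit cubes -/
def cube {d : ℕ} (k : Fin d → ℤ) : Set (Fin d → ℝ) :=
  {x | ∀ i, x i - k i ∈ Set.Ioc (0 : ℝ) 1}

lemma cube_meas {d : ℕ} (k : Fin d → ℤ) : MeasurableSet (cube k) := by
  have : cube k = ⋂ i, {x : Fin d → ℝ | x i - k i ∈ Set.Ioc (0 : ℝ) 1} := by
    ext x; simp [cube]
  rw [this]
  refine MeasurableSet.iInter fun i => ?_
  have hm : Measurable (fun x : Fin d → ℝ => x i - k i) := by fun_prop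
  exact hm measurableSet_Ioc

lemma cube_disj {d : ℕ} : Pairwise (Function.onFun Disjoint (cube (d := d))) := by
  intro k l hkl
  rw [Function.onFun, Set.disjoint_left]
  intro x hx hy
  apply hkl
  ext i
  have h1 := hx i
  have h2 := hy i
  simp only [Set.mem_Ioc] at h1 h2
  have h3 : (k i : ℝ) < l i + 1 := by linarith
  have h4 : (l i : ℝ) < k i + 1 := by linarith
  have h5 : k i < l i + 1 := by exact_mod_cast h3
  have h6 : l i < k i + 1 := by exact_mod_cast h4
  omega

lemma cube_union {d : ℕ} : ⋃ k, cube (d := d) k = Set.univ := by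
  ext x
  simp only [Set.mem_iUnion, Set.mem_univ, iff_true]
  refine ⟨fun i => ⌈x i⌉ - 1, fun i => ?_⟩
  have h1 := Int.ceil_lt_add_one (x i)
  have h2 := Int.le_ceil (x i)
  simp only [Set.mem_Ioc, Int.cast_sub, Int.cast_one]
  constructor <;> linarith

lemma setInt_cube {d : ℕ} {E : Type*} [NormedAddCommGroup E] [NormedSpace ℝ E]
    (f : (Fin d → ℝ) → E) (k : Fin d → ℤ) :
    ∫ x in cube k, f x = ∫ x in cube (0 : Fin d → ℤ), f (x + ic k) := by
  have hp : MeasureTheory.MeasurePreserving (fun x : Fin d → ℝ => x + ic k)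
    MeasureTheory.volume MeasureTheory.volume :=
      MeasureTheory.measurePreserving_add_right _ _
  rw [← hp.setIntegral_preimage_emb (measurableEmbedding_addRight (ic k)) f]
  congr 2
  ext x
  simp [cube, ic]

/-- unfolding an integral -/
lemma integral_unfold {d : ℕ} (f : (Fin d → ℝ) → ℂ) (hf : MeasureTheory.Integrable f) :
    ∫ x, f x = ∫ x in cube (0 : Fin d → ℤ), ∑' k : Fin d → ℤ, f (x + ic k) := by
  have h1 : HasSum (fun k : Fin d → ℤ => ∫ x in cube k, f x) (∫ x, f x) := by
    have := MeasureTheory.hasSum_integral_iUnion (μ := MeasureTheory.volume) (f := f)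
      (fun k => cube_meas (d := d) k) cube_disj hf.integrableOn
    rwa [cube_union, MeasureTheory.setIntegral_univ] at this
  have h2 : HasSum (fun k : Fin d → ℤ => ∫ x in cube k, ‖f x‖) (∫ x, ‖f x‖) := by
    have := MeasureTheory.hasSum_integral_iUnion (μ := MeasureTheory.volume) (f := fun x => ‖f x‖)
      (fun k => cube_meas (d := d) k) cube_disj hf.norm.integrableOn
    rwa [cube_union, MeasureTheory.setIntegral_univ] at this
  simp only [setInt_cube f] at h1
  simp only [setInt_cube (fun x => ‖f x‖)] at h2
  have h3 := MeasureTheory.hasSum_integral_of_summable_integral_norm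
    (μ := MeasureTheory.volume.restrict (cube (0 : Fin d → ℤ)))
    (F := fun k x => f (x + ic k)) (fun k => (hf.comp_add_right (ic k)).integrableOn) h2.summable
  exact h1.unique h3

lemma haar_smul {d : ℕ} (A : (Fin d → ℝ) ≃L[ℝ] Euc d) : ∃ c : NNReal, 0 < c ∧
    MeasureTheory.Measure.map A MeasureTheory.volume =
      c • (MeasureTheory.volume : MeasureTheory.Measure (Euc d)) := by
  have hH : (MeasureTheory.Measure.map A MeasureTheory.volume).IsAddHaarMeasure :=
    A.isAddHaarMeasure_map _
  exact ⟨_, MeasureTheory.Measure.addHaarScalarFactor_pos_of_isAddHaarMeasure _ _,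
    MeasureTheory.Measure.isAddLeftInvariant_eq_smul _ _⟩

lemma exists_K {d : ℕ} (A : (Fin d → ℝ) ≃L[ℝ] Euc d) : ∃ K : ℝ, 0 < K ∧
    ∀ f : Euc d → ℂ, ∫ v, f (A v) = K * ∫ w, f w := by
  obtain ⟨c, hc0, hc⟩ := haar_smul A
  refine ⟨c, hc0, fun f => ?_⟩
  have h1 := MeasurableEmbedding.integral_map (μ := MeasureTheory.volume)
    A.toHomeomorph.measurableEmbedding f
  have h2 : MeasureTheory.Measure.map A.toHomeomorph MeasureTheory.volume
    = c • (MeasureTheory.volume : MeasureTheory.Measure (Euc d)) := hc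
  rw [h2, MeasureTheory.integral_smul_nnreal_measure, NNReal.smul_def, Complex.real_smul] at h1
  exact h1.symm

lemma gauss_fourier {d : ℕ} {a : ℝ} (ha : 0 < a) (w : Euc d) :
    ∫ v : Euc d, Complex.exp (-(Real.pi * a : ℝ) * ‖v‖ ^ 2 + (-(2 * Real.pi * Complex.I)) * ⟪w, v⟫)
      = ((a⁻¹ ^ ((d : ℝ) / 2) * Real.exp (-Real.pi * a⁻¹ * ‖w‖ ^ 2) : ℝ) : ℂ) := by
  have hpi := Real.pi_pos
  rw [GaussianFourier.integral_cexp_neg_mul_sq_norm_add_of_euclideanSpace (by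
    rw [Complex.ofReal_re]; positivity)]
  rw [Complex.ofReal_mul (a⁻¹ ^ ((d : ℝ) / 2)), Complex.ofReal_cpow (by positivity)]
  have hac : (a : ℂ) ≠ 0 := by exact_mod_cast ha.ne'
  have hpc : (Real.pi : ℂ) ≠ 0 := by exact_mod_cast hpi.ne'
  congr 1
  · congr 1
    · push_cast; field_simp
    · simp
  · push_cast
    congr 1
    field_simp
    linear_combination (4 * (‖w‖ : ℂ) ^ 2) * Complex.I_sq

lemma gauss_integrable {d : ℕ} {a : ℝ} (ha : 0 < a) (w : Euc d) :
    MeasureTheory.Integrable (fun v : Euc d => Complex.exp (-(Real.pi * a : ℝ) * ‖v‖ ^ 2 +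
      (-(2 * Real.pi * Complex.I)) * ⟪w, v⟫)) := by
  have hpi := Real.pi_pos
  exact GaussianFourier.integrable_cexp_neg_mul_sq_norm_add (by
    rw [Complex.ofReal_re]; positivity) _ _

lemma poisson {d : ℕ} (A B : (Fin d → ℝ) ≃L[ℝ] Euc d)
    (hAB : ∀ v w, ⟪A v, B w⟫ = v ⬝ᵥ w) : ∃ K : ℝ, 0 < K ∧ ∀ a : ℝ, 0 < a → ∀ u : Euc d,
    ∑' k : Fin d → ℤ, Real.exp (-(Real.pi * a) * ‖u + A (ic k)‖ ^ 2) =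
      K * (a⁻¹ ^ ((d : ℝ) / 2) * ∑' m : Fin d → ℤ, Real.exp (-(Real.pi * a⁻¹) * ‖B (ic m)‖ ^ 2) *
        Real.cos (2 * Real.pi * ⟪B (ic m), u⟫)) := by
  obtain ⟨K, hK, hKf⟩ := exists_K A
  refine ⟨K, hK, fun a ha u => ?_⟩
  have hpi := Real.pi_pos
  have hc : 0 < Real.pi * a := by positivity
  have hcoeff : ∀ m : Fin d → ℤ, UnitAddTorus.mFourierCoeff (torG A hc) m =
      ((K * (a⁻¹ ^ ((d : ℝ) / 2) * Real.exp (-(Real.pi * a⁻¹) * ‖B (ic m)‖ ^ 2)) : ℝ) : ℂ) := by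
    intro m
    rw [UnitAddTorus.mFourierCoeff_eq_integral _ _ 0]
    let f : Euc d → ℂ := fun v => Complex.exp (-(Real.pi * a : ℝ) * ‖v‖ ^ 2 +
      (-(2 * Real.pi * Complex.I)) * ⟪B (ic m), v⟫)
    have hfi : MeasureTheory.Integrable (fun v => f (A v)) := by
      obtain ⟨c, hc0, hc⟩ := haar_smul A
      have h1 : MeasureTheory.Integrable f (MeasureTheory.Measure.map A MeasureTheory.volume) := by
        rw [hc]
        exact (gauss_integrable ha _).smul_measure_nnreal
      exact (MeasurableEmbedding.integrable_map_iff A.toHomeomorph.measurableEmbedding).mp h1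
    have hu := integral_unfold _ hfi
    rw [hKf, gauss_fourier ha] at hu
    have hset : {x : Fin d → ℝ | ∀ i, x i ∈ Set.Ioc ((0 : Fin d → ℝ) i) ((0 : Fin d → ℝ) i + 1)} =
        cube (0 : Fin d → ℤ) := by
      ext x; simp [cube]
    have hR : ((K * (a⁻¹ ^ ((d : ℝ) / 2) * Real.exp (-(Real.pi * a⁻¹) * ‖B (ic m)‖ ^ 2)) : ℝ) : ℂ)
      = (K : ℂ) * ((a⁻¹ ^ ((d : ℝ) / 2) * Real.exp (-Real.pi * a⁻¹ * ‖B (ic m)‖ ^ 2) : ℝ) : ℂ) := by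
      push_cast; ring_nf
    rw [hR, hu, hset]
    congr 1
    ext x
    have e1 : torG A hc (fun i => (x i : UnitAddCircle)) = perG A (Real.pi * a) x :=
      torG_apply A hc x
    have e2 : UnitAddTorus.mFourier (-m) (fun i => (x i : UnitAddCircle)) =
      Complex.exp (2 * Real.pi * Complex.I * ((ic (-m) ⬝ᵥ x : ℝ) : ℂ)) := mFourier_prT (-m) x
    rw [e1, e2, perG, smul_eq_mul, ← tsum_mul_left]
    congr 1
    ext k
    simp only [f]
    rw [Complex.exp_add, Complex.ofReal_exp, mul_comm]
    congr 1
    · push_cast; rfl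
    · rw [real_inner_comm, hAB]
      rw [Complex.exp_eq_exp_iff_exists_int]
      refine ⟨∑ i, k i * m i, ?_⟩
      have : (x + ic k) ⬝ᵥ ic m = - (ic (-m) ⬝ᵥ x) + ((∑ i, k i * m i : ℤ) : ℝ) := by
        simp only [dotProduct, ic, Pi.add_apply, Pi.neg_apply, add_mul, Finset.sum_add_distrib]
        simp [mul_comm]
      rw [this]
      push_cast
      ring
  have hsumm : Summable (UnitAddTorus.mFourierCoeff (torG A hc)) := by
    have h0 := summable_gauss B (c := Real.pi * a⁻¹) (by positivity)
    have h1 := ((h0.mul_left (a⁻¹ ^ ((d : ℝ) / 2))).mul_left K)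
    refine (Complex.ofRealCLM.summable h1).congr fun m => ?_
    rw [hcoeff]; rfl
  have hs := UnitAddTorus.hasSum_mFourier_series_apply_of_summable hsumm (prT (A.symm u))
  have hs2 := Complex.reCLM.hasSum hs
  rw [torG_apply] at hs2
  have hre : Complex.reCLM (perG A (Real.pi * a) (A.symm u)) =
      ∑' k : Fin d → ℤ, Real.exp (-(Real.pi * a) * ‖u + A (ic k)‖ ^ 2) := by
    rw [perG, ← Complex.ofReal_tsum]
    simp
  rw [← hre, ← hs2.tsum_eq, ← tsum_mul_left, ← tsum_mul_left]
  congr 1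
  ext m
  rw [hcoeff, mFourier_prT, smul_eq_mul]
  simp only [Complex.reCLM_apply]
  rw [Complex.re_ofReal_mul]
  have : (2 * Real.pi * Complex.I * ((ic m ⬝ᵥ A.symm u : ℝ) : ℂ)) =
    ((2 * Real.pi * ⟪B (ic m), u⟫ : ℝ) : ℂ) * Complex.I := by
    have h := hAB (A.symm u) (ic m)
    rw [A.apply_symm_apply, real_inner_comm, dotProduct_comm] at h
    rw [h]; push_cast; ring
  rw [this, Complex.exp_ofReal_mul_I_re]
  ring

lemma exp_bound : Real.exp (1 - Real.pi) < 1 / 8.4 := by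
  have h1 : (8.4 : ℝ) < Real.exp (Real.pi - 1) := by
    have h2 : Real.exp (2 + 0.14) ≤ Real.exp (Real.pi - 1) := by
      rw [Real.exp_le_exp]; linarith [Real.pi_gt_d2]
    have h3 : Real.exp (2 + 0.14) = Real.exp 1 * Real.exp 1 * Real.exp 0.14 := by
      rw [← Real.exp_add, ← Real.exp_add]; norm_num
    have h4 := Real.exp_one_gt_d9
    have h5 := Real.add_one_le_exp (0.14 : ℝ)
    have h6 : (7.38 : ℝ) < Real.exp 1 * Real.exp 1 := by nlinarith
    have h7 : (7.38 : ℝ) * 1.14 ≤ Real.exp 1 * Real.exp 1 * Real.exp 0.14 := by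
      apply mul_le_mul h6.le (by linarith) (by norm_num) (by positivity)
    norm_num at h7 ⊢
    linarith
  have : Real.exp (1 - Real.pi) = 1 / Real.exp (Real.pi - 1) := by
    rw [one_div, ← Real.exp_neg]; congr 1; ring
  rw [this]
  exact one_div_lt_one_div_of_lt (by norm_num) h1

lemma num_ineq {d : ℕ} (hd : 2 ≤ d) :
    3 * (Real.pi ^ ((d : ℝ) / 2) * Real.exp (-(Real.pi - 1) * ((d : ℝ) / 2))) <
      1 + Real.exp (-(Real.pi - 1) * ((d : ℝ) / 2)) +
      (Real.pi ^ ((d : ℝ) / 2) * Real.exp (-(Real.pi - 1) * ((d : ℝ) / 2))) *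
        Real.exp (-(Real.pi - 1) * ((d : ℝ) / 2)) := by
  have hE := exp_bound
  have hE0 := Real.exp_pos (1 - Real.pi)
  have hp1 := Real.pi_gt_d2
  have hp2 := Real.pi_lt_d4
  rcases eq_or_lt_of_le hd with rfl | h3
  · have e1 : (-(Real.pi - 1) * (((2 : ℕ) : ℝ) / 2)) = 1 - Real.pi := by push_cast; ring
    have e2 : ((2 : ℕ) : ℝ) / 2 = 1 := by norm_num
    rw [e1, e2, Real.rpow_one]
    set x := Real.exp (1 - Real.pi)
    norm_num at hE hp1 hp2
    have : 0 ≤ (3 * x - x ^ 2) * (3.1416 - Real.pi) := by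
      apply mul_nonneg <;> norm_num <;> nlinarith
    norm_num at this
    nlinarith
  · set g := Real.pi ^ ((d : ℝ) / 2) * Real.exp (-(Real.pi - 1) * ((d : ℝ) / 2)) with hg
    have hg0 : 0 < g := by positivity
    have hsq : g ^ 2 = (Real.pi * Real.exp (1 - Real.pi)) ^ d := by
      rw [hg, mul_pow, mul_pow, ← Real.exp_nat_mul, ← Real.exp_nat_mul, ← Real.rpow_natCast,
        ← Real.rpow_mul Real.pi_pos.le, ← Real.rpow_natCast]
      congr 2
      · push_cast; ring
      · push_cast; ring
    have hq : Real.pi * Real.exp (1 - Real.pi) ≤ 0.4 := by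
      norm_num at hE hp1 hp2 ⊢
      nlinarith
    have h4 : g ^ 2 ≤ 0.4 ^ 3 := by
      rw [hsq]
      calc _ ≤ (0.4 : ℝ) ^ d := by gcongr
        _ ≤ 0.4 ^ 3 := pow_le_pow_of_le_one (by norm_num) (by norm_num) h3
    have h5 : g < 1 / 3 := by
      norm_num at h4 ⊢
      nlinarith
    have := Real.exp_pos (-(Real.pi - 1) * ((d : ℝ) / 2))
    have := mul_pos hg0 this
    linarith

lemma key {d : ℕ} (hd : 2 ≤ d) (A B : (Fin d → ℝ) ≃L[ℝ] Euc d)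
    (hAB : ∀ v w, ⟪A v, B w⟫ = v ⬝ᵥ w) {r₁ r₂ : ℝ} (h₁ : 0 < r₁) (h₂ : 0 < r₂)
    (hr : r₁ * r₂ = (d : ℝ) / 2) (u : Euc d) (hu : ∀ k : Fin d → ℤ, r₁ ≤ ‖u + A (ic k)‖)
    (hB : ∀ m : Fin d → ℤ, ‖B (ic m)‖ ≤ r₂ → Real.cos (2 * Real.pi * ⟪B (ic m), u⟫) = 1) :
    False := by
  obtain ⟨K, hK, hP⟩ := poisson A B hAB
  have hpi := Real.pi_pos
  have hpi1 : 1 < Real.pi := by linarith [Real.pi_gt_three]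
  set p : ℝ := (d : ℝ) / 2 with hp
  set ε := Real.exp (-(Real.pi - 1) * p) with hε
  have hε0 : 0 < ε := Real.exp_pos _
  set a : ℝ := r₂ / r₁ with ha
  have ha0 : 0 < a := by positivity
  have har₁ : a * r₁ ^ 2 = p := by rw [← hr, ha]; field_simp
  have har₂ : a⁻¹ * r₂ ^ 2 = p := by rw [← hr, ha]; field_simp
  let θ : ℝ → ℝ := fun s => ∑' m : Fin d → ℤ, Real.exp (-(Real.pi * s) * ‖B (ic m)‖ ^ 2)
  have hθs : ∀ s, 0 < s → Summable fun m : Fin d → ℤ =>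
      Real.exp (-(Real.pi * s) * ‖B (ic m)‖ ^ 2) := fun s hs => summable_gauss B (by positivity)
  have hcs : ∀ s, 0 < s → Summable fun m : Fin d → ℤ =>
      Real.exp (-(Real.pi * s) * ‖B (ic m)‖ ^ 2) * Real.cos (2 * Real.pi * ⟪B (ic m), u⟫) := by
    intro s hs
    refine Summable.of_norm_bounded (hθs s hs) fun m => ?_
    rw [norm_mul, Real.norm_of_nonneg (Real.exp_pos _).le]
    exact mul_le_of_le_one_right (Real.exp_pos _).le (Real.abs_cos_le_one _)
  set N := ∑' m : Fin d → ℤ, Real.exp (-(Real.pi * a⁻¹) * ‖B (ic m)‖ ^ 2) *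
        Real.cos (2 * Real.pi * ⟪B (ic m), u⟫) with hN
  have hap : 0 < a⁻¹ ^ p := Real.rpow_pos_of_pos (by positivity) _
  -- upper bound for N
  have hup : N ≤ (Real.pi ^ p * ε) * θ a⁻¹ := by
    have e1 := hP a ha0 u
    have e2 := hP (a / Real.pi) (by positivity) u
    have hle : ∑' k : Fin d → ℤ, Real.exp (-(Real.pi * a) * ‖u + A (ic k)‖ ^ 2) ≤
        ε * ∑' k : Fin d → ℤ, Real.exp (-(Real.pi * (a / Real.pi)) * ‖u + A (ic k)‖ ^ 2) := by
      rw [← tsum_mul_left]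
      refine Summable.tsum_le_tsum (fun k => ?_) (summable_gauss_shift A (by positivity) u)
        ((summable_gauss_shift A (by positivity) u).mul_left _)
      rw [hε, ← Real.exp_add, Real.exp_le_exp]
      have hx : r₁ ^ 2 ≤ ‖u + A (ic k)‖ ^ 2 := by
        have := hu k
        gcongr
      have e3 : Real.pi * (a / Real.pi) = a := by field_simp
      rw [e3]
      have := mul_le_mul_of_nonneg_left hx ha0.le
      rw [har₁] at this
      nlinarith
    rw [e1, e2] at hle
    have e4 : (a / Real.pi)⁻¹ ^ p = Real.pi ^ p * a⁻¹ ^ p := by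
      rw [inv_div, div_eq_mul_inv, Real.mul_rpow hpi.le (by positivity)]
    rw [e4] at hle
    have hle2 : ∑' m : Fin d → ℤ, Real.exp (-(Real.pi * (a / Real.pi)⁻¹) * ‖B (ic m)‖ ^ 2) *
        Real.cos (2 * Real.pi * ⟪B (ic m), u⟫) ≤ θ a⁻¹ := by
      refine Summable.tsum_le_tsum (fun m => ?_) (hcs _ (by positivity)) (hθs _ (by positivity))
      refine (mul_le_of_le_one_right (Real.exp_pos _).le (Real.cos_le_one _)).trans ?_
      rw [Real.exp_le_exp]
      have : a⁻¹ ≤ (a / Real.pi)⁻¹ := by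
        apply inv_anti₀ (by positivity)
        exact div_le_self ha0.le hpi1.le
      have := mul_le_mul_of_nonneg_left this hpi.le
      have := mul_le_mul_of_nonneg_right this (sq_nonneg ‖B (ic m)‖)
      linarith
    have hle3 : K * (a⁻¹ ^ p * N) ≤ K * (a⁻¹ ^ p * ((Real.pi ^ p * ε) * θ a⁻¹)) := by
      refine hle.trans ?_
      calc _ ≤ ε * (K * (Real.pi ^ p * a⁻¹ ^ p * θ a⁻¹)) := by gcongr
        _ = _ := by ring
    exact le_of_mul_le_mul_left (le_of_mul_le_mul_left hle3 hK) hap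
  -- growth bound for θ
  have hgrow : θ (Real.pi * a)⁻¹ ≤ Real.pi ^ p * θ a⁻¹ := by
    have e1 := hP a ha0 0
    have e2 := hP (Real.pi * a) (by positivity) 0
    simp only [inner_zero_right, mul_zero, Real.cos_zero, mul_one] at e1 e2
    have hle : ∑' k : Fin d → ℤ, Real.exp (-(Real.pi * (Real.pi * a)) * ‖0 + A (ic k)‖ ^ 2) ≤
        ∑' k : Fin d → ℤ, Real.exp (-(Real.pi * a) * ‖0 + A (ic k)‖ ^ 2) := by
      refine Summable.tsum_le_tsum (fun k => ?_) (summable_gauss_shift A (by positivity) 0)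
        (summable_gauss_shift A (by positivity) 0)
      rw [Real.exp_le_exp]
      have : a ≤ Real.pi * a := by nlinarith
      have := mul_le_mul_of_nonneg_left this hpi.le
      have := mul_le_mul_of_nonneg_right this (sq_nonneg ‖0 + A (ic k)‖)
      linarith
    rw [e1, e2] at hle
    have e4 : a⁻¹ ^ p = Real.pi ^ p * (Real.pi * a)⁻¹ ^ p := by
      rw [← Real.mul_rpow hpi.le (by positivity)]
      congr 1; field_simp
    have hle2 := le_of_mul_le_mul_left hle hK
    rw [e4] at hle2
    have : 0 < (Real.pi * a)⁻¹ ^ p := Real.rpow_pos_of_pos (by positivity) _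
    refine le_of_mul_le_mul_left (hle2.trans (le_of_eq ?_)) this
    simp only [θ]; ring
  classical
  let fP : (Fin d → ℤ) → ℝ := fun m =>
    if ‖B (ic m)‖ ≤ r₂ then Real.exp (-(Real.pi * a⁻¹) * ‖B (ic m)‖ ^ 2) else 0
  let fQ : (Fin d → ℤ) → ℝ := fun m =>
    if ‖B (ic m)‖ ≤ r₂ then 0 else Real.exp (-(Real.pi * a⁻¹) * ‖B (ic m)‖ ^ 2)
  have hs0 := hθs a⁻¹ (by positivity)
  have hsP : Summable fP := hs0.of_nonneg_of_le
    (fun m => by simp only [fP]; split_ifs <;> positivity)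
    (fun m => by simp only [fP]; split_ifs <;> first | exact le_rfl | positivity)
  have hsQ : Summable fQ := hs0.of_nonneg_of_le
    (fun m => by simp only [fQ]; split_ifs <;> positivity)
    (fun m => by simp only [fQ]; split_ifs <;> first | exact le_rfl | positivity)
  have hPQ : (∑' m, fP m) + ∑' m, fQ m = θ a⁻¹ := by
    rw [← hsP.tsum_add hsQ]
    congr 1; ext m
    simp only [fP, fQ]; split_ifs <;> simp
  have hlow : (∑' m, fP m) - ∑' m, fQ m ≤ N := by
    rw [← hsP.tsum_sub hsQ]
    refine Summable.tsum_le_tsum (fun m => ?_) (hsP.sub hsQ) (hcs _ (by positivity))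
    simp only [fP, fQ]
    split_ifs with h
    · rw [hB m h]; simp
    · have := Real.neg_one_le_cos (2 * Real.pi * ⟪B (ic m), u⟫)
      have h0 := Real.exp_pos (-(Real.pi * a⁻¹) * ‖B (ic m)‖ ^ 2)
      nlinarith
  have hQle : ∑' m, fQ m ≤ ε * (θ (Real.pi * a)⁻¹ - ∑' m, fP m) := by
    have hs1 := hθs (Real.pi * a)⁻¹ (by positivity)
    rw [← hs1.tsum_sub hsP, ← tsum_mul_left]
    refine Summable.tsum_le_tsum (fun m => ?_) hsQ ((hs1.sub hsP).mul_left _)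
    have e3 : Real.pi * (Real.pi * a)⁻¹ = a⁻¹ := by field_simp
    rw [e3]
    have hai : 0 < a⁻¹ := by positivity
    simp only [fP, fQ]
    split_ifs with h
    · apply mul_nonneg hε0.le
      rw [sub_nonneg, Real.exp_le_exp]
      have : a⁻¹ ≤ Real.pi * a⁻¹ := by nlinarith
      have := mul_le_mul_of_nonneg_right this (sq_nonneg ‖B (ic m)‖)
      linarith
    · rw [sub_zero, hε, ← Real.exp_add, Real.exp_le_exp]
      push Not at h
      have hx : r₂ ^ 2 ≤ ‖B (ic m)‖ ^ 2 := by gcongr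
      have := mul_le_mul_of_nonneg_left hx hai.le
      rw [har₂] at this
      nlinarith
  have hP1 : 1 ≤ ∑' m, fP m := by
    have := hsP.le_tsum 0 (fun m _ => by simp only [fP]; split_ifs <;> positivity)
    simpa [fP, ic_zero, h₂.le] using this
  have hnum := num_ineq hd
  rw [← hp, ← hε] at hnum
  set P := ∑' m, fP m
  set Q := ∑' m, fQ m
  set γ := Real.pi ^ p * ε with hγ
  have hγ0 : 0 < γ := by positivity
  have i1 : P - Q ≤ γ * (P + Q) := by rw [hPQ]; exact hlow.trans hup
  have i2 : Q ≤ γ * (P + Q) - ε * P := by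
    rw [hPQ]
    have := mul_le_mul_of_nonneg_left hgrow hε0.le
    calc Q ≤ _ := hQle
      _ ≤ ε * (Real.pi ^ p * θ a⁻¹) - ε * P := by linarith
      _ = _ := by rw [hγ]; ring
  have hγ1 : γ < 1 := by
    have hε1 : ε < 1 := by
      rw [hε, Real.exp_lt_one_iff]
      have : 0 < p := by rw [← hr]; positivity
      nlinarith
    nlinarith
  have j1 : (1 - γ) * P ≤ (1 + γ) * Q := by linarith
  have j2 : (1 - γ) * Q ≤ (γ - ε) * P := by linarith
  have j3 : (1 - γ) * ((1 - γ) * P) ≤ (1 + γ) * ((γ - ε) * P) := by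
    calc _ ≤ (1 - γ) * ((1 + γ) * Q) := mul_le_mul_of_nonneg_left j1 (by linarith)
      _ = (1 + γ) * ((1 - γ) * Q) := by ring
      _ ≤ _ := mul_le_mul_of_nonneg_left j2 (by linarith)
  have j4 : (1 + ε + γ * ε - 3 * γ) * P ≤ 0 := by linarith
  have : 0 < (1 + ε + γ * ε - 3 * γ) * P := mul_pos (by linarith) (by linarith)
  linarith

/-- The lattice generated by `A`, as an additive subgroup. -/
def lat {d : ℕ} (A : (Fin d → ℝ) ≃L[ℝ] Euc d) : AddSubgroup (Euc d) :=
  (AddMonoidHom.mk' (fun k : Fin d → ℤ => A (ic k)) (fun k l => by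
    rw [ic_add, map_add])).range

lemma mem_lat {d : ℕ} {A : (Fin d → ℝ) ≃L[ℝ] Euc d} {x : Euc d} :
    x ∈ lat A ↔ ∃ k : Fin d → ℤ, A (ic k) = x := Iff.rfl

lemma lat_finite {d : ℕ} (A : (Fin d → ℝ) ≃L[ℝ] Euc d) (r : ℝ) :
    {k : Fin d → ℤ | ‖A (ic k)‖ ≤ r}.Finite := by
  have h := (summable_gauss A one_pos).tendsto_cofinite_zero
  have h2 := h.eventually (gt_mem_nhds (Real.exp_pos (-1 * r ^ 2)))
  rw [Filter.eventually_cofinite] at h2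
  refine h2.subset fun k hk => ?_
  simp only [Set.mem_ofPred_eq, not_lt, Real.exp_le_exp] at hk ⊢
  have : ‖A (ic k)‖ ^ 2 ≤ r ^ 2 := by gcongr
  linarith

lemma finrank_iff_top {d : ℕ} (S : Submodule ℝ (Euc d)) :
    d ≤ Module.finrank ℝ S ↔ S = ⊤ := by
  constructor
  · intro h
    apply Submodule.eq_top_of_finrank_eq
    have := Submodule.finrank_le S
    rw [finrank_euclideanSpace_fin] at this ⊢
    omega
  · rintro rfl
    rw [finrank_top, finrank_euclideanSpace_fin]

lemma one_mem_iff {d : ℕ} (Λ : Set (Euc d)) (r : ℝ) :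
    1 ≤ Module.finrank ℝ (Submodule.span ℝ (Λ ∩ Metric.closedBall (0 : Euc d) r)) ↔
      ∃ x ∈ Λ, x ≠ 0 ∧ ‖x‖ ≤ r := by
  rw [Submodule.one_le_finrank_iff, Ne, Submodule.span_eq_bot]
  push Not
  constructor
  · rintro ⟨x, ⟨h1, h2⟩, h3⟩
    exact ⟨x, h1, h3, by simpa using h2⟩
  · rintro ⟨x, h1, h3, h2⟩
    exact ⟨x, ⟨h1, by simpa using h2⟩, h3⟩

lemma succMin_le {d : ℕ} (Λ : Set (Euc d)) (j : ℕ) {r : ℝ} (hr : 0 < r)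
    (h : j ≤ Module.finrank ℝ (Submodule.span ℝ (Λ ∩ Metric.closedBall (0 : Euc d) r))) :
    succMin Λ j ≤ r :=
  csInf_le ⟨0, fun _ hx => hx.1.le⟩ ⟨hr, h⟩

lemma succMin_one_le_norm {d : ℕ} (Λ : Set (Euc d)) {x : Euc d} (hx : x ∈ Λ) (h0 : x ≠ 0) :
    succMin Λ 1 ≤ ‖x‖ :=
  succMin_le Λ 1 (norm_pos_iff.mpr h0) ((one_mem_iff _ _).mpr ⟨x, hx, h0, le_rfl⟩)

lemma lat_span {d : ℕ} (A : (Fin d → ℝ) ≃L[ℝ] Euc d) : ∃ r : ℝ, 0 < r ∧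
    Submodule.span ℝ ((lat A : Set (Euc d)) ∩ Metric.closedBall (0 : Euc d) r) = ⊤ := by
  let b := (Pi.basisFun ℝ (Fin d)).map A.toLinearEquiv
  have hnn : ∀ j, 0 ≤ ‖b j‖ := fun j => norm_nonneg _
  refine ⟨∑ i, ‖b i‖ + 1, by positivity, ?_⟩
  rw [eq_top_iff, ← b.span_eq]
  apply Submodule.span_mono
  rintro _ ⟨i, rfl⟩
  refine ⟨mem_lat.mpr ⟨Pi.single i 1, ?_⟩, ?_⟩
  · simp only [b, Module.Basis.map_apply, Pi.basisFun_apply]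
    show A _ = A _
    congr 1
    ext j
    by_cases h : j = i
    · subst h; simp [ic]
    · simp [ic, h]
  · rw [mem_closedBall_zero_iff]
    have := Finset.single_le_sum (f := fun j => ‖b j‖) (fun j _ => hnn j) (Finset.mem_univ i)
    linarith

lemma succSet_d_nonempty {d : ℕ} (A : (Fin d → ℝ) ≃L[ℝ] Euc d) :
    { r : ℝ | 0 < r ∧ d ≤ Module.finrank ℝ (Submodule.span ℝ
      ((lat A : Set (Euc d)) ∩ Metric.closedBall (0 : Euc d) r)) }.Nonempty := by
  obtain ⟨r, h0, h⟩ := lat_span A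
  exact ⟨r, h0, (finrank_iff_top _).mpr h⟩

lemma succSet_one_nonempty {d : ℕ} (hd : 1 ≤ d) (A : (Fin d → ℝ) ≃L[ℝ] Euc d) :
    { r : ℝ | 0 < r ∧ 1 ≤ Module.finrank ℝ (Submodule.span ℝ
      ((lat A : Set (Euc d)) ∩ Metric.closedBall (0 : Euc d) r)) }.Nonempty := by
  obtain ⟨r, h0, h⟩ := succSet_d_nonempty A
  exact ⟨r, h0, hd.trans h⟩

lemma sepRad_eq_s1 {d : ℕ} (hd : 1 ≤ d) (A : (Fin d → ℝ) ≃L[ℝ] Euc d) :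
    sepRad (lat A : Set (Euc d)) = succMin (lat A : Set (Euc d)) 1 / 2 := by
  have hne := succSet_one_nonempty hd A
  have : sInf (Set.image norm ((lat A : Set (Euc d)) \ {0})) = succMin (lat A : Set (Euc d)) 1 := by
    apply le_antisymm
    · refine le_csInf hne ?_
      rintro r ⟨_, hr⟩
      obtain ⟨x, hx, h0, hxr⟩ := (one_mem_iff _ _).mp hr
      refine le_trans (csInf_le ⟨0, ?_⟩ ⟨x, ⟨hx, h0⟩, rfl⟩) hxr
      rintro _ ⟨y, _, rfl⟩
      exact norm_nonneg y
    · refine le_csInf ?_ ?_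
      · obtain ⟨r, _, hr⟩ := hne
        obtain ⟨x, hx, h0, hxr⟩ := (one_mem_iff _ _).mp hr
        exact ⟨_, x, ⟨hx, h0⟩, rfl⟩
      · rintro _ ⟨x, ⟨hx, h0⟩, rfl⟩
        exact succMin_one_le_norm _ hx h0
  rw [sepRad, this]; ring

lemma lat_round_one {d : ℕ} (e b : Euc d) (c r : ℝ) (hb : ‖b‖ ≤ r) :
    ∃ k : ℤ, ‖e + (c - k) • b‖ ^ 2 ≤ ‖e‖ ^ 2 + r ^ 2 / 4 := by
  by_contra! h
  have h1 := h ⌊c⌋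
  have h2 := h (⌊c⌋ + 1)
  have f0 := Int.fract_nonneg c
  have f1 := (Int.fract_lt_one c).le
  have e1 : c - ⌊c⌋ = Int.fract c := rfl
  have e2 : c - ((⌊c⌋ + 1 : ℤ) : ℝ) = Int.fract c - 1 := by push_cast; rw [← e1]; ring
  rw [e1] at h1
  rw [e2] at h2
  set f := Int.fract c
  rw [norm_add_sq_real, norm_smul, mul_pow, inner_smul_right, Real.norm_eq_abs, sq_abs] at h1 h2
  have hb2 : ‖b‖ ^ 2 ≤ r ^ 2 := by gcongr
  have hf : f * (1 - f) ≤ 1 / 4 := by nlinarith [sq_nonneg (f - 1 / 2)]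
  have hf0 : 0 ≤ f * (1 - f) := mul_nonneg f0 (by linarith)
  have h3 : f * (1 - f) * ‖b‖ ^ 2 ≤ r ^ 2 / 4 := by
    nlinarith [sq_nonneg r, sq_nonneg ‖b‖]
  set I := ⟪e, b⟫
  set n := ‖b‖ ^ 2
  rcases eq_or_lt_of_le f0 with hf' | hf'
  · rw [← hf'] at h1; nlinarith [sq_nonneg r]
  · have h4 := mul_lt_mul_of_pos_left h2 hf'
    have h5 := mul_le_mul_of_nonneg_left h1.le (by linarith : 0 ≤ 1 - f)
    nlinarith

lemma round_many {d : ℕ} {ι : Type*} (s : Finset ι) (b : ι → Euc d) (c : ι → ℝ) (r : ℝ)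
    (hb : ∀ i, ‖b i‖ ≤ r) :
    ∃ k : ι → ℤ, ‖∑ i ∈ s, (c i - k i) • b i‖ ^ 2 ≤ s.card * (r ^ 2 / 4) := by
  classical
  induction s using Finset.induction_on with
  | empty => exact ⟨0, by simp⟩
  | insert i s his ih =>
    obtain ⟨k, hk⟩ := ih
    obtain ⟨n, hn⟩ := lat_round_one (∑ i ∈ s, (c i - k i) • b i) (b i) (c i) r (hb i)
    refine ⟨Function.update k i n, ?_⟩
    rw [Finset.sum_insert his, Finset.card_insert_of_notMem his, Function.update_self, add_comm]
    have : ∑ x ∈ s, (c x - (Function.update k i n x : ℤ)) • b x = ∑ i ∈ s, (c i - k i) • b i := by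
      refine Finset.sum_congr rfl fun x hx => ?_
      have hne : x ≠ i := by rintro rfl; exact his hx
      rw [Function.update_of_ne hne]
    rw [this]
    push_cast
    linarith

lemma cover_of_span {d : ℕ} (A : (Fin d → ℝ) ≃L[ℝ] Euc d) {r : ℝ} (hr : 0 < r)
    (h : Submodule.span ℝ ((lat A : Set (Euc d)) ∩ Metric.closedBall (0 : Euc d) r) = ⊤)
    (x : Euc d) : ∃ y ∈ lat A, dist x y ≤ Real.sqrt d / 2 * r := by
  let b := Module.Basis.ofSpan h.ge
  have hsub := Module.Basis.ofSpan_subset h.ge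
  have hbm : ∀ i, b i ∈ (lat A : Set (Euc d)) ∩ Metric.closedBall (0 : Euc d) r := fun i =>
    hsub ⟨i, rfl⟩
  have : Fintype _ := FiniteDimensional.fintypeBasisIndex b
  have hcard := Module.finrank_eq_card_basis b
  rw [finrank_euclideanSpace_fin] at hcard
  obtain ⟨k, hk⟩ := round_many Finset.univ b (fun i => b.repr x i) r
    (fun i => by simpa using (hbm i).2)
  refine ⟨∑ i, k i • b i, (lat A).sum_mem fun i _ => (lat A).zsmul_mem (hbm i).1 _, ?_⟩
  rw [dist_eq_norm]
  have e : ∑ i, ((b.repr x i) - (k i : ℝ)) • b i = x - ∑ i, k i • b i := by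
    simp only [sub_smul, Finset.sum_sub_distrib]
    rw [b.sum_repr]
    simp only [Int.cast_smul_eq_zsmul]
  rw [e, Finset.card_univ, ← hcard] at hk
  have h2 : (Real.sqrt d / 2 * r) ^ 2 = d * (r ^ 2 / 4) := by
    rw [mul_pow, div_pow, Real.sq_sqrt (by positivity)]; ring
  rw [← h2] at hk
  exact le_of_sq_le_sq hk (by positivity)

lemma bdd_dist {d : ℕ} (Λ : Set (Euc d)) (x : Euc d) : BddBelow (Set.image (dist x) Λ) :=
  ⟨0, by rintro _ ⟨y, _, rfl⟩; exact dist_nonneg⟩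

lemma cov_le {d : ℕ} (A : (Fin d → ℝ) ≃L[ℝ] Euc d) {r : ℝ} (hr : 0 < r)
    (h : Submodule.span ℝ ((lat A : Set (Euc d)) ∩ Metric.closedBall (0 : Euc d) r) = ⊤)
    (x : Euc d) : sInf (Set.image (dist x) (lat A : Set (Euc d))) ≤ Real.sqrt d / 2 * r := by
  obtain ⟨y, hy, hxy⟩ := cover_of_span A hr h x
  exact (csInf_le (bdd_dist _ _) ⟨y, hy, rfl⟩).trans hxy

lemma cov_bdd {d : ℕ} (A : (Fin d → ℝ) ≃L[ℝ] Euc d) :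
    BddAbove (Set.range fun x : Euc d => sInf (Set.image (dist x) (lat A : Set (Euc d)))) := by
  obtain ⟨r, hr, h⟩ := lat_span A
  exact ⟨_, by rintro _ ⟨x, rfl⟩; exact cov_le A hr h x⟩

lemma covRad_upper {d : ℕ} (A : (Fin d → ℝ) ≃L[ℝ] Euc d) :
    2 * covRad (lat A : Set (Euc d)) ≤ Real.sqrt d * succMin (lat A : Set (Euc d)) d := by
  have h : ∀ r ∈ { r : ℝ | 0 < r ∧ d ≤ Module.finrank ℝ (Submodule.span ℝ
      ((lat A : Set (Euc d)) ∩ Metric.closedBall (0 : Euc d) r)) },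
      2 * covRad (lat A : Set (Euc d)) ≤ Real.sqrt d * r := by
    rintro r ⟨hr, h⟩
    have : covRad (lat A : Set (Euc d)) ≤ Real.sqrt d / 2 * r :=
      ciSup_le fun x => cov_le A hr ((finrank_iff_top _).mp h) x
    linarith
  rcases (Real.sqrt_nonneg (d : ℝ)).eq_or_lt with h0 | h0
  · obtain ⟨r, hr⟩ := succSet_d_nonempty A
    have := h r hr
    rw [← h0] at this ⊢
    linarith
  · rw [← div_le_iff₀' h0]
    refine le_csInf (succSet_d_nonempty A) fun r hr => ?_
    rw [div_le_iff₀' h0]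
    exact h r hr

lemma exists_near {d : ℕ} (A : (Fin d → ℝ) ≃L[ℝ] Euc d) (x : Euc d) {t : ℝ}
    (ht : covRad (lat A : Set (Euc d)) < t) : ∃ y ∈ lat A, dist x y < t := by
  have h1 : sInf (Set.image (dist x) (lat A : Set (Euc d))) < t :=
    (le_ciSup (cov_bdd A) x).trans_lt ht
  have hne : (Set.image (dist x) (lat A : Set (Euc d))).Nonempty :=
    ⟨_, 0, (lat A).zero_mem, rfl⟩
  obtain ⟨_, ⟨y, hy, rfl⟩, h⟩ := exists_lt_of_csInf_lt hne h1
  exact ⟨y, hy, h⟩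

lemma covRad_nonneg {d : ℕ} (A : (Fin d → ℝ) ≃L[ℝ] Euc d) : 0 ≤ covRad (lat A : Set (Euc d)) :=
  Real.iSup_nonneg fun x => Real.sInf_nonneg (by rintro _ ⟨y, _, rfl⟩; exact dist_nonneg)

lemma span_of_gt_s1 {d : ℕ} (A : (Fin d → ℝ) ≃L[ℝ] Euc d) {r : ℝ}
    (hr : 2 * covRad (lat A : Set (Euc d)) < r) :
    Submodule.span ℝ ((lat A : Set (Euc d)) ∩ Metric.closedBall (0 : Euc d) r) = ⊤ := by
  set V := Submodule.span ℝ ((lat A : Set (Euc d)) ∩ Metric.closedBall (0 : Euc d) r) with hV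
  have hall : ∀ x ∈ lat A, x ∈ V := by
    by_contra! hcon
    obtain ⟨x₀, hx₀, hx₀V⟩ := hcon
    obtain ⟨k₀, rfl⟩ := mem_lat.mp hx₀
    let S : Set (Fin d → ℤ) := {k | ‖A (ic k)‖ ≤ ‖A (ic k₀)‖} ∩ {k | A (ic k) ∉ V}
    have hS : S.Finite := (lat_finite A _).subset Set.inter_subset_left
    have hk₀ : k₀ ∈ S := ⟨le_refl ‖A (ic k₀)‖, hx₀V⟩
    obtain ⟨k, hkS, hkmin⟩ := hS.exists_minimalFor (fun k => ‖A (ic k)‖) S ⟨k₀, hk₀⟩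
    have hmin : ∀ y ∈ lat A, ‖y‖ < ‖A (ic k)‖ → y ∈ V := by
      intro y hy hlt
      obtain ⟨l, rfl⟩ := mem_lat.mp hy
      by_contra hyV
      have := hkmin (j := l) ⟨hlt.le.trans hkS.1, hyV⟩ hlt.le
      simp only at this
      linarith
    set x := A (ic k) with hx
    have hxr : r < ‖x‖ := by
      by_contra! hle
      exact hkS.2 (Submodule.subset_span ⟨mem_lat.mpr ⟨k, rfl⟩, by simpa using hle⟩)
    obtain ⟨y, hy, hyd⟩ := exists_near A ((1 / 2 : ℝ) • x)
      (show covRad (lat A : Set (Euc d)) < r / 2 by linarith)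
    rw [dist_eq_norm] at hyd
    have hhalf : ‖(1 / 2 : ℝ) • x‖ = ‖x‖ / 2 := by
      rw [norm_smul]; norm_num; ring
    have hy1 : ‖y‖ < ‖x‖ := by
      have : y = (1 / 2 : ℝ) • x - ((1 / 2 : ℝ) • x - y) := by abel
      rw [this]
      refine (norm_sub_le _ _).trans_lt ?_
      linarith
    have hy2 : ‖x - y‖ < ‖x‖ := by
      have : x - y = (1 / 2 : ℝ) • x + ((1 / 2 : ℝ) • x - y) := by module
      rw [this]
      refine (norm_add_le _ _).trans_lt ?_
      linarith
    have m1 := hmin y hy hy1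
    have m2 := hmin (x - y) ((lat A).sub_mem (mem_lat.mpr ⟨k, rfl⟩) hy) hy2
    have := V.add_mem m2 m1
    rw [sub_add_cancel] at this
    exact hkS.2 this
  obtain ⟨s, _, hs⟩ := lat_span A
  rw [eq_top_iff, ← hs, Submodule.span_le]
  exact fun x hx => hall x hx.1

lemma covRad_lower {d : ℕ} (A : (Fin d → ℝ) ≃L[ℝ] Euc d) :
    succMin (lat A : Set (Euc d)) d ≤ 2 * covRad (lat A : Set (Euc d)) := by
  refine le_of_forall_gt fun r hr => ?_
  obtain ⟨s, hs1, hs2⟩ := exists_between hr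
  have h0 := covRad_nonneg A
  exact (succMin_le _ _ (by linarith) ((finrank_iff_top _).mpr (span_of_gt_s1 A hs1))).trans_lt hs2

lemma succMin_nonneg {d : ℕ} (Λ : Set (Euc d)) (j : ℕ) : 0 ≤ succMin Λ j :=
  Real.sInf_nonneg fun _ hr => hr.1.le

/-- `1 ≤ λ₁(M) λ_d(N)` for dual lattices. -/
lemma one_le_succMin_mul {d : ℕ} (hd : 1 ≤ d) (A B : (Fin d → ℝ) ≃L[ℝ] Euc d)
    (hAB : ∀ v w, ⟪A v, B w⟫ = v ⬝ᵥ w) :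
    1 ≤ succMin (lat A : Set (Euc d)) 1 * succMin (lat B : Set (Euc d)) d := by
  have h : ∀ r ∈ { r : ℝ | 0 < r ∧ 1 ≤ Module.finrank ℝ (Submodule.span ℝ
      ((lat A : Set (Euc d)) ∩ Metric.closedBall (0 : Euc d) r)) },
      ∀ s ∈ { r : ℝ | 0 < r ∧ d ≤ Module.finrank ℝ (Submodule.span ℝ
      ((lat B : Set (Euc d)) ∩ Metric.closedBall (0 : Euc d) r)) }, 1 ≤ r * s := by
    rintro r ⟨hr, hr1⟩ s ⟨hs, hs1⟩
    obtain ⟨x, hx, hx0, hxr⟩ := (one_mem_iff _ _).mp hr1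
    rw [finrank_iff_top] at hs1
    have : ∃ y ∈ (lat B : Set (Euc d)) ∩ Metric.closedBall (0 : Euc d) s, ⟪x, y⟫ ≠ 0 := by
      by_contra! hcon
      have hle : Submodule.span ℝ ((lat B : Set (Euc d)) ∩ Metric.closedBall (0 : Euc d) s) ≤
          (ℝ ∙ x)ᗮ := by
        rw [Submodule.span_le]
        intro y hy
        exact Submodule.mem_orthogonal_singleton_iff_inner_right.mpr (hcon y hy)
      rw [hs1, top_le_iff] at hle
      have hxx : x ∈ (ℝ ∙ x)ᗮ := by rw [hle]; trivial
      rw [Submodule.mem_orthogonal_singleton_iff_inner_right] at hxx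
      exact hx0 (inner_self_eq_zero.mp hxx)
    obtain ⟨y, ⟨hy, hys⟩, hxy⟩ := this
    obtain ⟨k, rfl⟩ := mem_lat.mp hx
    obtain ⟨m, rfl⟩ := mem_lat.mp hy
    have hint : ⟪A (ic k), B (ic m)⟫ = ((∑ i, k i * m i : ℤ) : ℝ) := by
      rw [hAB]; simp [dotProduct, ic]
    have h1 : 1 ≤ |⟪A (ic k), B (ic m)⟫| := by
      rw [hint] at hxy ⊢
      have : (∑ i, k i * m i : ℤ) ≠ 0 := by exact_mod_cast hxy
      exact_mod_cast Int.one_le_abs this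
    have hys' : ‖B (ic m)‖ ≤ s := by simpa using hys
    calc 1 ≤ _ := h1
      _ ≤ _ := abs_real_inner_le_norm _ _
      _ ≤ r * s := by gcongr
  have h2 : ∀ r ∈ { r : ℝ | 0 < r ∧ 1 ≤ Module.finrank ℝ (Submodule.span ℝ
      ((lat A : Set (Euc d)) ∩ Metric.closedBall (0 : Euc d) r)) },
      1 ≤ r * succMin (lat B : Set (Euc d)) d := by
    intro r hr
    rw [← div_le_iff₀' hr.1]
    refine le_csInf (succSet_d_nonempty B) fun s hs => ?_
    rw [div_le_iff₀' hr.1]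
    exact h r hr s hs
  obtain ⟨r₀, hr₀⟩ := succSet_one_nonempty hd A
  have hpos : 0 < succMin (lat B : Set (Euc d)) d := by
    rcases (succMin_nonneg (lat B : Set (Euc d)) d).eq_or_lt with h0 | h0
    · have := h2 r₀ hr₀
      rw [← h0] at this
      linarith
    · exact h0
  rw [← div_le_iff₀ hpos]
  refine le_csInf ⟨r₀, hr₀⟩ fun r hr => ?_
  rw [div_le_iff₀ hpos]
  exact h2 r hr

lemma ban_cover {d : ℕ} (hd : 2 ≤ d) (A B : (Fin d → ℝ) ≃L[ℝ] Euc d)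
    (hAB : ∀ v w, ⟪A v, B w⟫ = v ⬝ᵥ w) :
    2 * covRad (lat A : Set (Euc d)) * succMin (lat B : Set (Euc d)) 1 ≤ d := by
  by_contra! hcon
  set l := succMin (lat B : Set (Euc d)) 1 with hl
  have hd0 : (0 : ℝ) < d := by positivity
  have hl0 : 0 < l := by
    rcases (succMin_nonneg (lat B : Set (Euc d)) 1).eq_or_lt with h0 | h0
    · rw [← hl] at h0; rw [← h0] at hcon; linarith
    · exact h0
  have h1 : (d : ℝ) / 2 / l < covRad (lat A : Set (Euc d)) := by
    rw [div_lt_iff₀ hl0]; linarith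
  obtain ⟨x, hx⟩ := exists_lt_of_lt_ciSup h1
  set r₁ := sInf (Set.image (dist x) (lat A : Set (Euc d))) with hr₁
  have hr₁0 : 0 < r₁ := lt_trans (by positivity) hx
  refine key hd A B hAB (r₁ := r₁) (r₂ := (d : ℝ) / 2 / r₁) hr₁0 (by positivity)
    (by field_simp) (-x) (fun k => ?_) (fun m hm => ?_)
  · have : dist x (A (ic k)) = ‖-x + A (ic k)‖ := by
      rw [dist_comm, dist_eq_norm]; congr 1; abel
    rw [← this]
    exact csInf_le (bdd_dist _ _) ⟨_, mem_lat.mpr ⟨k, rfl⟩, rfl⟩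
  · have hlt : (d : ℝ) / 2 / r₁ < l := by
      rw [div_lt_iff₀ hl0] at hx
      rw [div_lt_iff₀ hr₁0]; linarith
    have : B (ic m) = 0 := by
      by_contra h0
      have := succMin_one_le_norm (lat B : Set (Euc d)) (mem_lat.mpr ⟨m, rfl⟩) h0
      linarith
    rw [this]; simp

lemma ban_transfer {d : ℕ} (hd : 2 ≤ d) (A B : (Fin d → ℝ) ≃L[ℝ] Euc d)
    (hAB : ∀ v w, ⟪A v, B w⟫ = v ⬝ᵥ w) :
    succMin (lat A : Set (Euc d)) 1 * succMin (lat B : Set (Euc d)) d ≤ d := by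
  by_contra! hcon
  set l := succMin (lat A : Set (Euc d)) 1 with hl
  have hd0 : (0 : ℝ) < d := by positivity
  have hl0 : 0 < l := by
    rcases (succMin_nonneg (lat A : Set (Euc d)) 1).eq_or_lt with h0 | h0
    · rw [← hl] at h0; rw [← h0] at hcon; linarith
    · exact h0
  have hr₂ : 0 < (d : ℝ) / l := by positivity
  have hlt : (d : ℝ) / l < succMin (lat B : Set (Euc d)) d := by
    rw [div_lt_iff₀ hl0]; linarith
  have hnt : Submodule.span ℝ ((lat B : Set (Euc d)) ∩
      Metric.closedBall (0 : Euc d) ((d : ℝ) / l)) ≠ ⊤ := by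
    intro h
    have := succMin_le (lat B : Set (Euc d)) d hr₂ ((finrank_iff_top _).mpr h)
    linarith
  set V := Submodule.span ℝ ((lat B : Set (Euc d)) ∩
      Metric.closedBall (0 : Euc d) ((d : ℝ) / l)) with hV
  have hbot : Vᗮ ≠ ⊥ := fun h => hnt ((Submodule.orthogonal_eq_bot_iff).mp h)
  obtain ⟨w, hw, hw0⟩ := Submodule.exists_mem_ne_zero_of_ne_bot hbot
  have hwn : 0 < ‖w‖ := norm_pos_iff.mpr hw0
  have hun : ‖(l / 2 / ‖w‖) • w‖ = l / 2 := by
    rw [norm_smul, Real.norm_of_nonneg (by positivity)]; field_simp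
  refine key hd A B hAB (r₁ := l / 2) (r₂ := (d : ℝ) / l) (by positivity) hr₂
    (by field_simp) ((l / 2 / ‖w‖) • w) (fun k => ?_) (fun m hm => ?_)
  · by_cases h0 : A (ic k) = 0
    · rw [h0, add_zero, hun]
    · have h1 := succMin_one_le_norm (lat A : Set (Euc d)) (mem_lat.mpr ⟨k, rfl⟩) h0
      have h2 : ‖A (ic k)‖ ≤ ‖(l / 2 / ‖w‖) • w + A (ic k)‖ + ‖(l / 2 / ‖w‖) • w‖ := by
        simpa using norm_sub_le ((l / 2 / ‖w‖) • w + A (ic k)) ((l / 2 / ‖w‖) • w)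
      rw [hun] at h2
      linarith
  · have hm' : B (ic m) ∈ V := Submodule.subset_span ⟨mem_lat.mpr ⟨m, rfl⟩, by simpa using hm⟩
    have := (Submodule.mem_orthogonal _ _).mp hw _ hm'
    rw [inner_smul_right, this]; simp

lemma main_abs {d : ℕ} (hd : 1 ≤ d) (A B : (Fin d → ℝ) ≃L[ℝ] Euc d)
    (hAB : ∀ v w, ⟪A v, B w⟫ = v ⬝ᵥ w) :
    max (succMin (lat A : Set (Euc d)) d / succMin (lat A : Set (Euc d)) 1)
        ((d : ℝ)⁻¹ * (succMin (lat B : Set (Euc d)) d / succMin (lat B : Set (Euc d)) 1))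
        ≤ meshRatio (lat A : Set (Euc d)) ∧
    meshRatio (lat A : Set (Euc d)) ≤
      min (Real.sqrt d * (succMin (lat A : Set (Euc d)) d / succMin (lat A : Set (Euc d)) 1))
        (d * (succMin (lat B : Set (Euc d)) d / succMin (lat B : Set (Euc d)) 1)) := by
  have hBA : ∀ v w, ⟪B v, A w⟫ = v ⬝ᵥ w := fun v w => by
    rw [real_inner_comm, hAB, dotProduct_comm]
  have d1 := one_le_succMin_mul hd A B hAB
  have d2 := one_le_succMin_mul hd B A hBA
  have lo := covRad_lower A
  have up := covRad_upper A
  have n1 := succMin_nonneg (lat A : Set (Euc d)) 1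
  have n2 := succMin_nonneg (lat A : Set (Euc d)) d
  have n3 := succMin_nonneg (lat B : Set (Euc d)) 1
  have n4 := succMin_nonneg (lat B : Set (Euc d)) d
  have hρ : meshRatio (lat A : Set (Euc d)) = 2 * covRad (lat A : Set (Euc d)) /
      succMin (lat A : Set (Euc d)) 1 := by
    rw [meshRatio, sepRad_eq_s1 hd]
    rw [div_div_eq_mul_div]; ring
  have bans : 2 ≤ d → _ := fun h => And.intro (ban_cover h A B hAB) (ban_transfer h A B hAB)
  rw [hρ]
  set h := covRad (lat A : Set (Euc d))
  have p1 : 0 < succMin (lat A : Set (Euc d)) 1 := by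
    rcases n1.eq_or_lt with h0 | h0
    · rw [← h0] at d1; linarith
    · exact h0
  have p3 : 0 < succMin (lat B : Set (Euc d)) 1 := by
    rcases n3.eq_or_lt with h0 | h0
    · rw [← h0] at d2; linarith
    · exact h0
  have i1 : succMin (lat A : Set (Euc d)) d / succMin (lat A : Set (Euc d)) 1 ≤
      2 * h / succMin (lat A : Set (Euc d)) 1 := by gcongr
  have i2 : 2 * h / succMin (lat A : Set (Euc d)) 1 ≤
      Real.sqrt d * (succMin (lat A : Set (Euc d)) d / succMin (lat A : Set (Euc d)) 1) := by
    rw [← mul_div_assoc]; gcongr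
  rcases eq_or_lt_of_le hd with rfl | h2
  · simp only [Nat.cast_one, Real.sqrt_one, inv_one, one_mul] at i1 i2 ⊢
    rw [div_self p1.ne'] at i1 i2 ⊢
    rw [div_self p3.ne']
    exact ⟨by simpa using i1, by simpa using i2⟩
  · obtain ⟨b1, b2⟩ := bans h2
    have hd0 : (0 : ℝ) < d := by positivity
    refine ⟨max_le i1 ?_, le_min i2 ?_⟩
    · rw [inv_mul_eq_div, div_div, div_le_div_iff₀ (by positivity) p1]
      have : 1 ≤ 2 * h * succMin (lat B : Set (Euc d)) 1 := by nlinarith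
      nlinarith
    · rw [← mul_div_assoc, div_le_div_iff₀ p1 p3]
      nlinarith

lemma exists_dual {d : ℕ} (T : Matrix (Fin d) (Fin d) ℝ) (hT : IsUnit T.det) :
    ∃ A B : (Fin d → ℝ) ≃L[ℝ] Euc d, (∀ v i, A v i = T.mulVec v i) ∧
      ∀ v w, ⟪A v, B w⟫ = v ⬝ᵥ w := by
  have h1 : T * T⁻¹ = 1 := Matrix.mul_nonsing_inv T hT
  have h2 : T⁻¹ * T = 1 := Matrix.nonsing_inv_mul T hT
  let e : Euc d ≃L[ℝ] (Fin d → ℝ) := PiLp.continuousLinearEquiv 2 ℝ (fun _ : Fin d => ℝ)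
  have h3 : T⁻¹.transpose * T.transpose = 1 := by rw [← Matrix.transpose_mul, h1]; simp
  have h4 : T.transpose * T⁻¹.transpose = 1 := by rw [← Matrix.transpose_mul, h2]; simp
  refine ⟨(Matrix.toLin'OfInv h2 h1).toContinuousLinearEquiv.trans e.symm,
    (Matrix.toLin'OfInv h4 h3).toContinuousLinearEquiv.trans e.symm, ?_, ?_⟩
  · intro v i
    simp [e]
  · intro v w
    have : ∀ x y : Fin d → ℝ, ⟪(e.symm x : Euc d), e.symm y⟫ = x ⬝ᵥ y := by
      intro x y
      simp [e, PiLp.inner_apply, dotProduct, mul_comm]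
    refine (this (T.mulVec v) (T⁻¹.transpose.mulVec w)).trans ?_
    rw [Matrix.dotProduct_mulVec, Matrix.vecMul_transpose, Matrix.mulVec_mulVec, h2,
      Matrix.one_mulVec]

theorem stmt1 {d : ℕ} (hd : 1 ≤ d) (Λ : Set (Euc d)) (T : Matrix (Fin d) (Fin d) ℝ)
    (hT : IsLatticeOf Λ T) :
    max (succMin Λ d / succMin Λ 1)
        ((d : ℝ)⁻¹ * (succMin (dualLat Λ) d / succMin (dualLat Λ) 1)) ≤ meshRatio Λ ∧
    meshRatio Λ ≤ min (Real.sqrt d * (succMin Λ d / succMin Λ 1))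
        (d * (succMin (dualLat Λ) d / succMin (dualLat Λ) 1)) := by
  classical
  obtain ⟨A, B, hA, hAB⟩ := exists_dual T hT.1
  have e1 : Λ = (lat A : Set (Euc d)) := by
    rw [hT.2]
    ext v
    constructor
    · rintro ⟨k, hk⟩
      refine mem_lat.mpr ⟨k, ?_⟩
      ext i
      rw [hA, hk i]
      rfl
    · intro hv
      obtain ⟨k, rfl⟩ := mem_lat.mp hv
      refine ⟨k, fun i => ?_⟩
      rw [hA]
      rfl
  have e2 : dualLat Λ = (lat B : Set (Euc d)) := by
    ext y
    constructor
    · intro hy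
      have h : ∀ i, ∃ n : ℤ, B.symm y i = n := by
        intro i
        obtain ⟨n, hn⟩ := hy (A (ic (Pi.single i 1))) (by
          rw [e1]; exact mem_lat.mpr ⟨_, rfl⟩)
        refine ⟨n, ?_⟩
        have h2 := hAB (ic (Pi.single i 1)) (B.symm y)
        rw [B.apply_symm_apply, hn] at h2
        rw [h2]
        have h3 : ic (Pi.single i (1 : ℤ)) = Pi.single i (1 : ℝ) := by
          ext j
          by_cases h : j = i
          · subst h; simp [ic]
          · simp [ic, h]
        rw [h3, single_one_dotProduct]
      choose n hn using h
      refine mem_lat.mpr ⟨n, ?_⟩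
      have h4 : ic n = B.symm y := by
        ext i
        rw [hn i]
        rfl
      rw [h4, B.apply_symm_apply]
    · intro hy
      obtain ⟨m, rfl⟩ := mem_lat.mp hy
      intro x hx
      rw [e1] at hx
      obtain ⟨k, rfl⟩ := mem_lat.mp hx
      exact ⟨∑ i, k i * m i, by rw [hAB]; simp [dotProduct, ic]⟩
  rw [e2, e1]
  exact main_abs hd A B hAB

end
end

section
/- Let Λ ⊂ ℝ^d be a full-rank lattice and let P = Λ ∩ [0,1)^d contain at least 2 points. Then the mesh ratio of P with respect to [0,1]^d satisfies ρ(P) ≤ 2√d · ρ(Λ) if h(Λ) ≥ 1/2, and ρ(P) ≤ (1+√d) · ρ(Λ) if h(Λ) < 1/2. -/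
open scoped RealInnerProductSpace

noncomputable section

theorem euc_norm_le {d : ℕ} (u : Euc d) (c : ℝ) (hc : 0 ≤ c) (h : ∀ i, |u i| ≤ c) :
    ‖u‖ ≤ Real.sqrt d * c := by
  rw [EuclideanSpace.norm_eq]
  apply Real.sqrt_le_iff.2
  refine ⟨by positivity, ?_⟩
  rw [mul_pow, Real.sq_sqrt (by positivity)]
  calc ∑ i, ‖u i‖ ^ 2 ≤ ∑ _i : Fin d, c ^ 2 := by
        apply Finset.sum_le_sum
        intro i _
        rw [Real.norm_eq_abs]
        exact pow_le_pow_left₀ (abs_nonneg _) (h i) 2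
    _ = d * c ^ 2 := by simp

theorem lattice_basis {d : ℕ} (Λ : Set (Euc d)) (T : Matrix (Fin d) (Fin d) ℝ)
    (hT : IsLatticeOf Λ T) : ∃ b : Module.Basis (Fin d) ℝ (Euc d),
      Λ = (Submodule.span ℤ (Set.range b) : Set (Euc d)) := by
  obtain ⟨hu, rfl⟩ := hT
  let e := (EuclideanSpace.basisFun (Fin d) ℝ).toBasis
  refine ⟨e.map (Matrix.toLinearEquiv e T hu), ?_⟩
  have hb : ∀ j i, (e.map (Matrix.toLinearEquiv e T hu) j) i = T i j := by
    intro j i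
    have : (Matrix.toLin e e T) (e j) = ∑ i, T i j • e i := Matrix.toLin_self _ _ _ _
    simp only [Module.Basis.map_apply, Matrix.toLinearEquiv_apply, this]
    simp [e, Finset.sum_apply, Pi.single_apply]
  ext v
  simp only [Set.mem_ofPred_eq, SetLike.mem_coe, Submodule.mem_span_range_iff_exists_fun]
  constructor
  · rintro ⟨k, hk⟩
    refine ⟨k, ?_⟩
    ext i
    rw [hk i]
    simp only [WithLp.ofLp_sum, Finset.sum_apply, WithLp.ofLp_smul, Pi.smul_apply, hb]
    exact Finset.sum_congr rfl fun j _ => by rw [zsmul_eq_mul, mul_comm]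
  · rintro ⟨k, rfl⟩
    refine ⟨k, fun i => ?_⟩
    simp only [WithLp.ofLp_sum, Finset.sum_apply, WithLp.ofLp_smul, Pi.smul_apply, hb]
    exact Finset.sum_congr rfl fun j _ => by rw [zsmul_eq_mul, mul_comm]

theorem sInf_dist_nonneg {d : ℕ} (x : Euc d) (S : Set (Euc d)) :
    0 ≤ sInf (Set.image (dist x) S) := by
  apply Real.sInf_nonneg
  rintro _ ⟨y, _, rfl⟩
  exact dist_nonneg

theorem sInf_dist_le {d : ℕ} (x y : Euc d) (S : Set (Euc d)) (hy : y ∈ S) :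
    sInf (Set.image (dist x) S) ≤ dist x y := by
  apply csInf_le
  · refine ⟨0, ?_⟩
    rintro _ ⟨y, _, rfl⟩
    exact dist_nonneg
  · exact ⟨y, hy, rfl⟩

theorem covRad_bdd {d : ℕ} (b : Module.Basis (Fin d) ℝ (Euc d)) :
    BddAbove (Set.range fun x : Euc d =>
      sInf (Set.image (dist x) (Submodule.span ℤ (Set.range b) : Set (Euc d)))) := by
  refine ⟨∑ i, ‖b i‖, ?_⟩
  rintro _ ⟨x, rfl⟩
  refine (sInf_dist_le x (ZSpan.floor b x : Euc d) _ (ZSpan.floor b x).2).trans ?_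
  rw [dist_eq_norm]
  exact ZSpan.norm_fract_le b x

theorem lattice_sep {d : ℕ} (b : Module.Basis (Fin d) ℝ (Euc d)) :
    ∃ ε > 0, ∀ x ∈ (Submodule.span ℤ (Set.range b) : Set (Euc d)), x ≠ 0 → ε ≤ ‖x‖ := by
  have hd : DiscreteTopology (Submodule.span ℤ (Set.range b)) := inferInstance
  have h0 : IsOpen ({0} : Set (Submodule.span ℤ (Set.range b))) := isOpen_discrete _
  obtain ⟨ε, hε, h⟩ := Metric.isOpen_iff.1 h0 0 rfl
  refine ⟨ε, hε, fun x hx hx0 => ?_⟩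
  by_contra! hlt
  have : (⟨x, hx⟩ : Submodule.span ℤ (Set.range b)) ∈ ({0} : Set _) := by
    apply h
    rw [Metric.mem_ball, dist_zero_right]
    exact hlt
  apply hx0
  exact congrArg Subtype.val this

theorem stmt5 {d : ℕ} (Λ : Set (Euc d)) (T : Matrix (Fin d) (Fin d) ℝ)
    (hT : IsLatticeOf Λ T) (hP : (Λ ∩ halfOpenCube d).Nontrivial) :
    (1 / 2 ≤ covRad Λ →
      meshRatioSet (Λ ∩ halfOpenCube d) ≤ 2 * Real.sqrt d * meshRatio Λ) ∧
    (covRad Λ < 1 / 2 →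
      meshRatioSet (Λ ∩ halfOpenCube d) ≤ (1 + Real.sqrt d) * meshRatio Λ) := by
  obtain ⟨b, hb⟩ := lattice_basis Λ T hT
  obtain ⟨ε, hε, hsep⟩ := lattice_sep b
  have hbdd := covRad_bdd b
  have hsub : ∀ x ∈ Λ, ∀ y ∈ Λ, x - y ∈ Λ := by
    intro x hx y hy
    rw [hb] at hx hy ⊢
    exact Submodule.sub_mem _ hx hy
  have hz : (0 : Euc d) ∈ Λ := by rw [hb]; exact Submodule.zero_mem _
  rw [← hb] at hsep hbdd
  obtain ⟨p, hp, p', hp', hne⟩ := hP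
  have hq : 0 < sepRad Λ := by
    unfold sepRad
    have : ε ≤ sInf (Set.image norm (Λ \ {0})) := by
      apply le_csInf
      · exact ⟨_, p - p', ⟨hsub _ hp.1 _ hp'.1, sub_ne_zero.2 hne⟩, rfl⟩
      · rintro _ ⟨x, ⟨hx, hx0⟩, rfl⟩
        exact hsep x hx hx0
    linarith
  have hqq : sepRad Λ ≤ sepRadSet (Λ ∩ halfOpenCube d) := by
    unfold sepRad sepRadSet
    apply mul_le_mul_of_nonneg_left _ (by norm_num)
    apply le_csInf
    · exact ⟨_, p, hp, p', hp', hne, rfl⟩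
    · rintro _ ⟨x, hx, y, hy, hxy, rfl⟩
      apply csInf_le
      · refine ⟨0, ?_⟩
        rintro _ ⟨y, _, rfl⟩
        exact norm_nonneg _
      · exact ⟨x - y, ⟨hsub _ hx.1 _ hy.1, sub_ne_zero.2 hxy⟩, (dist_eq_norm x y).symm⟩
  have key : ∀ c : ℝ, 0 ≤ c → covRadCube (Λ ∩ halfOpenCube d) ≤ c * covRad Λ →
      meshRatioSet (Λ ∩ halfOpenCube d) ≤ c * meshRatio Λ := by
    intro c hc h
    unfold meshRatioSet meshRatio
    have h0 : 0 ≤ covRadCube (Λ ∩ halfOpenCube d) :=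
      Real.iSup_nonneg fun x => sInf_dist_nonneg _ _
    rw [← mul_div_assoc]
    exact div_le_div₀ (h0.trans h) h hq hqq
  have hs : 0 ≤ Real.sqrt d := Real.sqrt_nonneg _
  have h0 : 0 ≤ covRad Λ := Real.iSup_nonneg fun x => sInf_dist_nonneg _ _
  refine ⟨fun h => key _ (by positivity) ?_, fun h => key _ (by positivity) ?_⟩
  · refine Real.iSup_le (fun x => ?_) (by positivity)
    refine (sInf_dist_le _ p _ hp).trans ?_
    rw [dist_eq_norm]
    refine (euc_norm_le _ 1 zero_le_one fun i => ?_).trans ?_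
    · have h1 := x.2 i
      have h2 := hp.2 i
      rw [PiLp.sub_apply, abs_le]
      constructor <;> linarith
    · nlinarith
  · refine Real.iSup_le (fun x => ?_) (by positivity)
    have main : ∀ r, covRad Λ < r → r < 1 / 2 →
        sInf (Set.image (dist (x : Euc d)) (Λ ∩ halfOpenCube d)) ≤ (1 + Real.sqrt d) * r := by
      intro r hr hr2
      let z : Euc d := WithLp.toLp 2 fun i => max r (min (x.1 i) (1 - r))
      have hzi : ∀ i, z i = max r (min (x.1 i) (1 - r)) := fun i => rfl
      have hlt : sInf (Set.image (dist z) Λ) < r := (le_ciSup hbdd z).trans_lt hr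
      have hnon : (Set.image (dist z) Λ).Nonempty := ⟨_, 0, hz, rfl⟩
      obtain ⟨_, ⟨y, hy, rfl⟩, hyr⟩ := exists_lt_of_csInf_lt hnon hlt
      have hyc : y ∈ halfOpenCube d := by
        intro i
        have h1 : |z i - y i| < r := by
          have := PiLp.norm_apply_le (z - y) i
          rw [← dist_eq_norm, Real.norm_eq_abs, PiLp.sub_apply] at this
          exact this.trans_lt hyr
        rw [abs_lt] at h1
        have h2 : r ≤ z i := le_max_left _ _
        have h3 : z i ≤ 1 - r := max_le (by linarith) (min_le_right _ _)
        constructor <;> linarith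
      refine (sInf_dist_le _ y (Λ ∩ halfOpenCube d) ⟨hy, hyc⟩).trans ?_
      have hxz : dist (x : Euc d) z ≤ Real.sqrt d * r := by
        rw [dist_eq_norm]
        refine euc_norm_le _ r (by linarith) fun i => ?_
        have h1 := x.2 i
        rw [PiLp.sub_apply, hzi, abs_le]
        rcases max_cases r (min (x.1 i) (1 - r)) with ⟨h, h'⟩ | ⟨h, h'⟩ <;>
        rcases min_cases (x.1 i) (1 - r) with ⟨g, g'⟩ | ⟨g, g'⟩ <;>
        constructor <;> linarith
      have := dist_triangle (x : Euc d) z y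
      linarith
    by_contra! hcon
    have hpos : 0 < 1 + Real.sqrt d := by positivity
    have hl : covRad Λ < sInf (Set.image (dist (x : Euc d)) (Λ ∩ halfOpenCube d)) /
        (1 + Real.sqrt d) := by
      rw [lt_div_iff₀ hpos]; linarith
    obtain ⟨r, hr1, hr2⟩ := exists_between (lt_min h hl)
    have h3 := main r hr1 (hr2.trans_le (min_le_left _ _))
    have h4 := hr2.trans_le (min_le_right _ _)
    rw [lt_div_iff₀ hpos] at h4
    linarith

end
end

section
/- Let Λ ⊂ ℝ^d be a full-rank lattice, let Δ ∈ ℝ^d be any fixed shift, and let P_Δ = (Λ + Δ) ∩ [0,1)^d contain at least 2 points. Then the mesh ratio of P_Δ with respect to [0,1]^d satisfies ρ(P_Δ) ≤ 2√d · ρ(Λ) if h(Λ) ≥ 1/2, and ρ(P_Δ) ≤ (1+√d) · ρ(Λ) if h(Λ) < 1/2. -/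
open scoped RealInnerProductSpace

noncomputable section

lemma lat_sub {d : ℕ} {Λ : Set (Euc d)} {T : Matrix (Fin d) (Fin d) ℝ}
    (hT : IsLatticeOf Λ T) {x y : Euc d} (hx : x ∈ Λ) (hy : y ∈ Λ) : x - y ∈ Λ := by
  obtain ⟨-, rfl⟩ := hT
  obtain ⟨k, hk⟩ := hx
  obtain ⟨l, hl⟩ := hy
  refine ⟨k - l, fun i => ?_⟩
  simp [hk, hl, mul_sub, Finset.sum_sub_distrib]

lemma lat_sep {d : ℕ} {Λ : Set (Euc d)} {T : Matrix (Fin d) (Fin d) ℝ}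
    (hT : IsLatticeOf Λ T) : ∃ ε > 0, ∀ v ∈ Λ, v ≠ 0 → ε ≤ ‖v‖ := by
  obtain ⟨hu, rfl⟩ := hT
  have hc : Continuous (fun v : Euc d => T⁻¹.mulVec v.ofLp) := by
    apply Continuous.matrix_mulVec continuous_const
    fun_prop
  obtain ⟨ε, hε, h⟩ := Metric.continuous_iff.1 hc 0 1 one_pos
  refine ⟨ε, hε, fun v hv hv0 => ?_⟩
  by_contra hlt
  push Not at hlt
  obtain ⟨k, hk⟩ := hv
  have hv' : v.ofLp = T.mulVec (fun j => (k j : ℝ)) := by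
    ext i
    simpa [Matrix.mulVec, dotProduct] using hk i
  have h1 := h v (by simpa using hlt)
  have hmul : T⁻¹.mulVec v.ofLp = fun j => (k j : ℝ) := by
    rw [hv', Matrix.mulVec_mulVec, Matrix.nonsing_inv_mul _ hu, Matrix.one_mulVec]
  apply hv0
  have hk0 : ∀ j, k j = 0 := by
    intro j
    have h2 := (dist_le_pi_dist _ _ j).trans_lt h1
    rw [hmul] at h2
    simp [Real.dist_eq] at h2
    have h3 : |k j| < 1 := by exact_mod_cast h2
    exact Int.abs_lt_one_iff.1 h3
  ext i
  rw [hk i]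
  simp [hk0]

lemma dist_bdd {d : ℕ} (x : Euc d) (P : Set (Euc d)) : BddBelow (Set.image (dist x) P) :=
  ⟨0, by rintro _ ⟨y, -, rfl⟩; exact dist_nonneg⟩

lemma inf_le {d : ℕ} (x : Euc d) {P : Set (Euc d)} {y : Euc d} (hy : y ∈ P) :
    sInf (Set.image (dist x) P) ≤ dist x y :=
  csInf_le (dist_bdd x P) (Set.mem_image_of_mem _ hy)

lemma lat_cov {d : ℕ} {Λ : Set (Euc d)} {T : Matrix (Fin d) (Fin d) ℝ}
    (hT : IsLatticeOf Λ T) :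
    BddAbove (Set.range fun x : Euc d => sInf (Set.image (dist x) Λ)) := by
  obtain ⟨hu, rfl⟩ := hT
  have hc : Continuous (fun c : Fin d → ℝ => (WithLp.toLp 2 (T.mulVec c) : Euc d)) := by
    apply (PiLp.continuous_toLp 2 _).comp
    apply Continuous.matrix_mulVec continuous_const continuous_id
  obtain ⟨R, hR⟩ := ((isCompact_Icc (a := (0 : Fin d → ℝ)) (b := 1)).image hc).isBounded.exists_norm_le
  refine ⟨R, ?_⟩
  rintro _ ⟨x, rfl⟩
  set c := T⁻¹.mulVec x.ofLp with hcdef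
  have hx : T.mulVec c = x.ofLp := by
    rw [hcdef, Matrix.mulVec_mulVec, Matrix.mul_nonsing_inv _ hu, Matrix.one_mulVec]
  let y : Euc d := WithLp.toLp 2 (T.mulVec (fun j => ((⌊c j⌋ : ℤ) : ℝ)))
  have hy : y ∈ { v : Euc d | ∃ k : Fin d → ℤ, ∀ i, v i = ∑ j, T i j * (k j : ℝ) } := by
    refine ⟨fun j => ⌊c j⌋, fun i => ?_⟩
    simp [y, Matrix.mulVec, dotProduct]
  refine (inf_le x hy).trans ?_
  · have hxy : x - y = WithLp.toLp 2 (T.mulVec (fun j => Int.fract (c j))) := by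
      have : (fun j => Int.fract (c j)) = c - (fun j => ((⌊c j⌋ : ℤ) : ℝ)) := by
        ext j; simp
      rw [this, Matrix.mulVec_sub, hx]
      rfl
    rw [dist_eq_norm, hxy]
    apply hR
    exact ⟨_, ⟨fun j => Int.fract_nonneg _, fun j => (Int.fract_lt_one _).le⟩, rfl⟩

lemma coord_dist {d : ℕ} (x y : Euc d) {r : ℝ} (hr : 0 ≤ r) (h : ∀ i, |x i - y i| ≤ r) :
    dist x y ≤ Real.sqrt d * r := by
  rw [EuclideanSpace.dist_eq]
  apply Real.sqrt_le_iff.2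
  refine ⟨by positivity, ?_⟩
  rw [mul_pow, Real.sq_sqrt (by positivity)]
  calc _ ≤ ∑ i : Fin d, r ^ 2 := Finset.sum_le_sum fun i _ => by
        rw [Real.dist_eq]; exact pow_le_pow_left₀ (abs_nonneg _) (h i) 2
    _ = _ := by simp

lemma coord_le_dist {d : ℕ} (x y : Euc d) (i : Fin d) : |x i - y i| ≤ dist x y := by
  rw [dist_eq_norm]
  simpa using PiLp.norm_apply_le (x - y) i

theorem stmt6 {d : ℕ} (Λ : Set (Euc d)) (T : Matrix (Fin d) (Fin d) ℝ)
    (hT : IsLatticeOf Λ T) (Δ : Euc d)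
    (hP : (((· + Δ) '' Λ) ∩ halfOpenCube d).Nontrivial) :
    (1 / 2 ≤ covRad Λ →
      meshRatioSet (((· + Δ) '' Λ) ∩ halfOpenCube d) ≤ 2 * Real.sqrt d * meshRatio Λ) ∧
    (covRad Λ < 1 / 2 →
      meshRatioSet (((· + Δ) '' Λ) ∩ halfOpenCube d) ≤ (1 + Real.sqrt d) * meshRatio Λ) := by
  set P := ((· + Δ) '' Λ) ∩ halfOpenCube d with hPdef
  obtain ⟨ε, hε, hsep⟩ := lat_sep hT
  have hdiff : ∀ x ∈ P, ∀ y ∈ P, x ≠ y → x - y ∈ Λ \ {0} := by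
    rintro x ⟨⟨a, ha, rfl⟩, -⟩ y ⟨⟨b, hb, rfl⟩, -⟩ hxy
    refine ⟨?_, by simpa [sub_eq_zero] using hxy⟩
    simpa using lat_sub hT ha hb
  obtain ⟨p, hp, p', hp', hpp⟩ := hP
  have hq : 0 < sepRad Λ := by
    have : ε ≤ sInf (Set.image norm (Λ \ {0})) := by
      refine le_csInf ⟨_, _, hdiff p hp p' hp' hpp, rfl⟩ ?_
      rintro _ ⟨v, hv, rfl⟩
      exact hsep v hv.1 hv.2
    unfold sepRad
    linarith
  have hqq : sepRad Λ ≤ sepRadSet P := by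
    unfold sepRad sepRadSet
    apply mul_le_mul_of_nonneg_left _ (by norm_num)
    refine le_csInf ⟨_, p, hp, p', hp', hpp, rfl⟩ ?_
    rintro _ ⟨x, hx, y, hy, hxy, rfl⟩
    rw [dist_eq_norm]
    refine csInf_le ⟨0, ?_⟩ ⟨_, hdiff x hx y hy hxy, rfl⟩
    rintro _ ⟨v, -, rfl⟩
    exact norm_nonneg _
  have hh0 : 0 ≤ covRad Λ := Real.iSup_nonneg fun x => Real.sInf_nonneg (by
    rintro _ ⟨y, -, rfl⟩; exact dist_nonneg)
  have hne : Nonempty (unitCube d) := ⟨⟨p, fun i => ⟨(hp.2 i).1, (hp.2 i).2.le⟩⟩⟩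
  have key : ∀ C : ℝ, 0 ≤ C → covRadCube P ≤ C * covRad Λ →
      meshRatioSet P ≤ C * meshRatio Λ := by
    intro C hC h
    unfold meshRatioSet meshRatio
    rw [← mul_div_assoc]
    exact div_le_div₀ (mul_nonneg hC hh0) h hq hqq
  constructor
  · intro h
    apply key _ (by positivity)
    apply ciSup_le
    rintro ⟨x, hx⟩
    refine (inf_le x hp).trans ?_
    have h1 : dist x p ≤ Real.sqrt d * 1 := coord_dist _ _ zero_le_one fun i => by
      have := hx i
      have := hp.2 i
      rw [abs_le]
      constructor <;> linarith
    have := Real.sqrt_nonneg (d : ℝ)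
    show dist x p ≤ _
    nlinarith
  · intro h
    apply key _ (by positivity)
    apply ciSup_le
    rintro ⟨x, hx⟩
    have hmain : ∀ r, covRad Λ < r → r < 1 / 2 →
        sInf (Set.image (dist x) P) ≤ (1 + Real.sqrt d) * r := by
      intro r hr hr2
      have hr0 : 0 ≤ r := hh0.trans hr.le
      let x' : Euc d := WithLp.toLp 2 fun i => max r (min (x i) (1 - r))
      have hx'1 : ∀ i, r ≤ x' i := fun i => le_max_left _ _
      have hx'2 : ∀ i, x' i ≤ 1 - r := fun i => max_le (by linarith) (min_le_right _ _)
      have hxx' : dist x x' ≤ Real.sqrt d * r := coord_dist _ _ hr0 fun i => by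
        have := hx i
        show |x i - max r (min (x i) (1 - r))| ≤ r
        rw [abs_le]
        rcases max_cases r (min (x i) (1 - r)) with h1 | h1 <;>
        rcases min_cases (x i) (1 - r) with h2 | h2 <;> constructor <;> linarith
      have hlt : sInf (Set.image (dist (x' - Δ)) Λ) < r :=
        (le_ciSup (lat_cov hT) (x' - Δ)).trans_lt hr
      have hΛ : Λ.Nonempty := ⟨_, (hdiff p hp p' hp' hpp).1⟩
      obtain ⟨_, ⟨y, hy, rfl⟩, hyr⟩ := exists_lt_of_csInf_lt (hΛ.image _) hlt
      have hyd : dist x' (y + Δ) < r := by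
        rw [dist_eq_norm] at hyr ⊢
        rwa [show x' - (y + Δ) = x' - Δ - y by abel]
      have hyP : y + Δ ∈ P := by
        refine ⟨⟨y, hy, rfl⟩, fun i => ?_⟩
        have h1 := (coord_le_dist x' (y + Δ) i).trans_lt hyd
        rw [abs_lt] at h1
        have := hx'1 i
        have := hx'2 i
        constructor <;> linarith
      refine (inf_le x hyP).trans ?_
      have := dist_triangle x x' (y + Δ)
      linarith
    have hs : 0 < 1 + Real.sqrt d := by positivity
    rw [mul_comm, ← div_le_iff₀ hs]
    apply le_of_forall_gt_imp_ge_of_dense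
    intro r hr
    have h3 := hmain (min r ((covRad Λ + 1 / 2) / 2)) (lt_min hr (by linarith))
      ((min_le_right _ _).trans_lt (by linarith))
    rw [div_le_iff₀ hs, mul_comm]
    exact h3.trans (mul_le_mul_of_nonneg_left (min_le_left _ _) hs.le)

end
end

section
/- Let d ≥ 1, let N ≥ 1 be an integer, let c₁ > 0, and let Λ ⊂ ℝ^d be a full-rank lattice with a generating matrix T satisfying |det(T)| = 1/N (so |det(T⁻¹)| = N). If λ₁(Λ) ≥ c₁ · N^{−1/d}, then the shortest nonzero vector of the dual lattice satisfies λ₁(Λ⊥) ≥ (2^d Γ(1+d/2) / (d! · π^{d/2})) · (c₁/d)^{d−1} · N^{1/d}. -/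
open scoped RealInnerProductSpace

noncomputable section

lemma aux_linforms {d : ℕ} (A : Matrix (Fin d) (Fin d) ℝ) (hA : A.det ≠ 0) (r : Fin d → ℝ)
    (hr : ∀ i, 0 < r i) (h : |A.det| < ∏ i, r i) :
    ∃ k : Fin d → ℤ, k ≠ 0 ∧ ∀ i, |(A.mulVec (fun j => (k j : ℝ))) i| < r i := by
  classical
  let box : Set (Fin d → ℝ) := Set.pi Set.univ fun i => Set.Ioo (-r i) (r i)
  let f : (Fin d → ℝ) →ₗ[ℝ] (Fin d → ℝ) := Matrix.toLin' A
  have hf : LinearMap.det f ≠ 0 := by simpa [f] using hA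
  have hconvbox : Convex ℝ box := convex_pi fun i _ => convex_Ioo _ _
  have hvol : MeasureTheory.volume (f ⁻¹' box)
      = ENNReal.ofReal (|A.det|⁻¹ * (2 ^ d * ∏ i, r i)) := by
    rw [MeasureTheory.Measure.addHaar_preimage_linearMap _ hf, Real.volume_pi_Ioo,
      ENNReal.ofReal_mul (by positivity), abs_inv]
    congr 1
    · simp [f]
    · rw [← ENNReal.ofReal_prod_of_nonneg (fun i _ => by linarith [hr i])]
      congr 1
      have : ∀ i, r i - -r i = 2 * r i := fun i => by ring
      simp [this, Finset.prod_mul_distrib]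
  have hlt : MeasureTheory.volume (ZSpan.fundamentalDomain (Pi.basisFun ℝ (Fin d)))
      * 2 ^ Module.finrank ℝ (Fin d → ℝ) < MeasureTheory.volume (f ⁻¹' box) := by
    rw [hvol, ZSpan.fundamentalDomain_pi_basisFun, Real.volume_pi_Ico]
    have hpos : 0 < |A.det| := abs_pos.mpr hA
    have h2 : (2 : ENNReal) ^ d = ENNReal.ofReal (2 ^ d) := by
      rw [ENNReal.ofReal_pow (by norm_num)]; simp
    simp only [sub_zero, ENNReal.ofReal_one, Finset.prod_const_one, one_mul,
      Module.finrank_fin_fun]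
    rw [h2]
    apply (ENNReal.ofReal_lt_ofReal_iff_of_nonneg (by positivity)).mpr
    rw [inv_mul_eq_div, lt_div_iff₀ hpos]
    exact mul_lt_mul_of_pos_left h (by positivity)
  have : Countable (Submodule.span ℤ (Set.range (Pi.basisFun ℝ (Fin d)))).toAddSubgroup :=
    inferInstanceAs (Countable (Submodule.span ℤ (Set.range (Pi.basisFun ℝ (Fin d)))))
  obtain ⟨x, hx0, hx⟩ :=
    MeasureTheory.exists_ne_zero_mem_lattice_of_measure_mul_two_pow_lt_measure
      (ZSpan.isAddFundamentalDomain' (Pi.basisFun ℝ (Fin d)) MeasureTheory.volume)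
      (s := f ⁻¹' box)
      (fun x hx => by
        simp only [Set.mem_preimage, box, Set.mem_pi, Set.mem_univ, true_imp_iff, map_neg,
          Pi.neg_apply, Set.mem_Ioo] at hx ⊢
        intro i
        have := hx i
        constructor <;> linarith)
      (hconvbox.linear_preimage f) hlt
  have hmem := ((Pi.basisFun ℝ (Fin d)).mem_span_iff_repr_mem ℤ (x : Fin d → ℝ)).mp x.2
  simp only [Pi.basisFun_repr, Set.mem_range] at hmem
  choose k hk using hmem
  have hk' : (fun j => (k j : ℝ)) = (x : Fin d → ℝ) := by
    funext j; simpa using hk j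
  refine ⟨k, ?_, ?_⟩
  · rintro rfl
    apply hx0
    ext j
    rw [← hk']
    simp
  · intro i
    rw [hk']
    have := hx
    simp only [Set.mem_preimage, box, Set.mem_pi, Set.mem_univ, true_imp_iff, Set.mem_Ioo, f,
      Matrix.toLin'_apply] at this
    exact abs_lt.mpr (this i)

lemma aux_const : ∀ d : ℕ, 2 ^ d * Real.Gamma (1 + (d : ℝ) / 2) ≤
    (d.factorial : ℝ) * Real.pi ^ ((d : ℝ) / 2)
  | 0 => by simp
  | 1 => by
    have h : Real.Gamma (1 + (1 : ℝ) / 2) = 1 / 2 * √Real.pi := by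
      rw [add_comm, Real.Gamma_add_one (by norm_num), Real.Gamma_one_half_eq]
    simp only [Nat.cast_one]
    rw [h, Real.sqrt_eq_rpow]
    simp
  | d + 2 => by
    have ih := aux_const d
    have e1 : (1 : ℝ) + ((d + 2 : ℕ) : ℝ) / 2 = (1 + (d : ℝ) / 2) + 1 := by push_cast; ring
    have e2 : (((d + 2 : ℕ) : ℝ) / 2) = (d : ℝ) / 2 + 1 := by push_cast; ring
    have hp : 0 < Real.pi ^ ((d : ℝ) / 2) := by positivity
    rw [e1, e2, Real.Gamma_add_one (by positivity), Real.rpow_add_one (by positivity),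
      Nat.factorial_succ, Nat.factorial_succ]
    push_cast
    have h3 : 4 * (1 + (d : ℝ) / 2) ≤ (d + 1 + 1) * (d + 1) * Real.pi := by
      have := Real.pi_gt_three
      have hd : (0 : ℝ) ≤ d := by positivity
      nlinarith [mul_nonneg hd hd, mul_nonneg hd (by linarith : 0 ≤ Real.pi - 3),
        mul_nonneg (mul_nonneg hd hd) (by linarith : 0 ≤ Real.pi - 3)]
    have h4 : 0 ≤ 4 * (1 + (d : ℝ) / 2) := by positivity
    calc _ = (4 * (1 + (d : ℝ) / 2)) * (2 ^ d * Real.Gamma (1 + (d : ℝ) / 2)) := by ring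
      _ ≤ ((d + 1 + 1) * (d + 1) * Real.pi) * ((d.factorial : ℝ) * Real.pi ^ ((d : ℝ) / 2)) := by
        apply mul_le_mul h3 ih _ (by positivity)
        have := Real.Gamma_pos_of_pos (by positivity : (0 : ℝ) < 1 + (d : ℝ) / 2)
        positivity
      _ = _ := by ring

lemma aux_succMin_le {d : ℕ} (Λ : Set (Euc d)) (x : Euc d) (hx : x ∈ Λ) (h0 : x ≠ 0) :
    succMin Λ 1 ≤ ‖x‖ := by
  apply csInf_le ⟨0, fun r hr => hr.1.le⟩
  refine ⟨norm_pos_iff.mpr h0, ?_⟩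
  rw [Submodule.one_le_finrank_iff]
  intro hbot
  apply h0
  have : x ∈ Submodule.span ℝ (Λ ∩ Metric.closedBall (0 : Euc d) ‖x‖) :=
    Submodule.subset_span ⟨hx, by simp⟩
  rw [hbot] at this
  simpa using this

lemma aux_le_succMin {d : ℕ} (Λ : Set (Euc d)) (B : ℝ) (hne : ∃ x ∈ Λ, x ≠ 0)
    (h : ∀ x ∈ Λ, x ≠ 0 → B ≤ ‖x‖) : B ≤ succMin Λ 1 := by
  apply le_csInf
  · obtain ⟨x, hx, h0⟩ := hne
    refine ⟨‖x‖, norm_pos_iff.mpr h0, ?_⟩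
    rw [Submodule.one_le_finrank_iff]
    intro hbot
    apply h0
    have : x ∈ Submodule.span ℝ (Λ ∩ Metric.closedBall (0 : Euc d) ‖x‖) :=
      Submodule.subset_span ⟨hx, by simp⟩
    rw [hbot] at this
    simpa using this
  · rintro r ⟨hr, h1⟩
    rw [Submodule.one_le_finrank_iff, Ne, Submodule.span_eq_bot] at h1
    push Not at h1
    obtain ⟨x, ⟨hx, hxr⟩, h0⟩ := h1
    exact (h x hx h0).trans (by simpa using hxr)

lemma aux_main {d : ℕ} (hd : 1 ≤ d) (Λ : Set (Euc d)) (T : Matrix (Fin d) (Fin d) ℝ)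
    (hT : IsLatticeOf Λ T) (m : ℝ) (hm : 0 < m) (hlam : m ≤ succMin Λ 1)
    (y : Euc d) (hy : y ∈ dualLat Λ) (hy0 : y ≠ 0) :
    |T.det|⁻¹ * (m / d) ^ (d - 1) ≤ ‖y‖ := by
  classical
  by_contra hcon
  push Not at hcon
  obtain ⟨hu, hΛ⟩ := hT
  have hdpos : (0 : ℝ) < d := by exact_mod_cast hd
  have hd1 : (1 : ℝ) ≤ d := by exact_mod_cast hd
  have hl : 0 < ‖y‖ := norm_pos_iff.mpr hy0
  have hdetpos : 0 < |T.det| := abs_pos.mpr hu.ne_zero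
  let i₀ : Fin d := ⟨0, hd⟩
  obtain ⟨b, hb⟩ := Orthonormal.exists_orthonormalBasis_extension_of_card_eq
    (𝕜 := ℝ) (E := Euc d) (ι := Fin d) (by simp) (v := fun _ => (‖y‖⁻¹ : ℝ) • y) (s := {i₀})
    (by
      constructor
      · rintro ⟨i, hi⟩
        simp [norm_smul, hl.ne']
      · rintro ⟨i, hi⟩ ⟨j, hj⟩ hij
        exact absurd (Subtype.ext (hi.trans hj.symm)) hij)
  have hb0 : b i₀ = (‖y‖⁻¹ : ℝ) • y := hb i₀ rfl
  let O : Matrix (Fin d) (Fin d) ℝ := Matrix.of fun i j => b i j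
  have hO : O * O.transpose = 1 := by
    ext i j
    have := orthonormal_iff_ite.mp b.orthonormal j i
    rw [PiLp.inner_apply] at this
    simp only [Matrix.mul_apply, Matrix.transpose_apply, O, Matrix.of_apply, Matrix.one_apply]
    simp only [RCLike.inner_apply, conj_trivial] at this
    rw [this]
    simp [eq_comm]
  have hOdet : |O.det| = 1 := by
    have h1 := congrArg Matrix.det hO
    rw [Matrix.det_mul, Matrix.det_transpose, Matrix.det_one] at h1
    have h2 : |O.det| * |O.det| = 1 := by rw [← abs_mul, h1, abs_one]
    nlinarith [abs_nonneg O.det]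
  let r : Fin d → ℝ := fun i => if i = i₀ then ‖y‖⁻¹ else m / d
  have hr : ∀ i, 0 < r i := by
    intro i
    simp only [r]
    split_ifs <;> positivity
  have hprod : ∏ i, r i = ‖y‖⁻¹ * (m / d) ^ (d - 1) := by
    rw [← Finset.mul_prod_erase _ _ (Finset.mem_univ i₀)]
    rw [Finset.prod_congr rfl (g := fun _ => m / d)
      (fun i hi => by simp [r, (Finset.mem_erase.mp hi).1])]
    simp [Finset.card_erase_of_mem, r, div_pow]
  have hdetA : |(O * T).det| = |T.det| := by rw [Matrix.det_mul, abs_mul, hOdet, one_mul]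
  obtain ⟨k, hk0, hk⟩ := aux_linforms (O * T) (abs_pos.mp (by rw [hdetA]; exact hdetpos)) r hr (by
    rw [hdetA, hprod, inv_mul_eq_div, lt_div_iff₀ hl]
    rw [inv_mul_eq_div, lt_div_iff₀ hdetpos] at hcon
    linarith)
  let x : Euc d := WithLp.toLp 2 (T.mulVec fun j => (k j : ℝ))
  have hxΛ : x ∈ Λ := by
    rw [hΛ]
    exact ⟨k, fun i => by simp [x, Matrix.mulVec, dotProduct]⟩
  have hx0 : x ≠ 0 := by
    intro h0
    have h1 : T.mulVec (fun j => (k j : ℝ)) = 0 := by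
      funext i
      exact congrArg (fun v : Euc d => v i) h0
    have h2 := Matrix.eq_zero_of_mulVec_eq_zero hu.ne_zero h1
    apply hk0
    funext j
    have h3 : (k j : ℝ) = 0 := congrFun h2 j
    exact_mod_cast h3
  have hinner : ∀ i, ((O * T).mulVec (fun j => (k j : ℝ))) i = ⟪b i, x⟫ := by
    intro i
    rw [← Matrix.mulVec_mulVec, PiLp.inner_apply]
    simp only [Matrix.mulVec, dotProduct, O, x, Matrix.of_apply, RCLike.inner_apply, conj_trivial]
    exact Finset.sum_congr rfl fun _ _ => mul_comm _ _
  simp only [hinner] at hk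
  have hzero : ⟪b i₀, x⟫ = 0 := by
    have h1 := hk i₀
    obtain ⟨n, hn⟩ := hy x hxΛ
    have h2 : ⟪b i₀, x⟫ = ‖y‖⁻¹ * n := by
      rw [hb0, real_inner_smul_left, real_inner_comm, hn]
    rw [h2] at h1 ⊢
    simp only [r, if_true, abs_mul, abs_inv, abs_norm] at h1
    have h3 : |(n : ℝ)| < 1 := by
      by_contra hc
      push Not at hc
      have : ‖y‖⁻¹ * 1 ≤ ‖y‖⁻¹ * |(n : ℝ)| := mul_le_mul_of_nonneg_left hc (by positivity)
      linarith
    have h4 : n = 0 := by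
      have : |n| < 1 := by exact_mod_cast h3
      exact Int.abs_lt_one_iff.mp this
    simp [h4]
  have hnorm : ‖x‖ ^ 2 ≤ (d - 1) * (m / d) ^ 2 := by
    rw [← b.sum_sq_inner_right x, ← Finset.add_sum_erase _ _ (Finset.mem_univ i₀), hzero]
    have : ∀ i ∈ Finset.univ.erase i₀, ⟪b i, x⟫ ^ 2 ≤ (m / d) ^ 2 := by
      intro i hi
      have h1 := hk i
      simp only [r, (Finset.mem_erase.mp hi).1, if_false] at h1
      exact sq_le_sq' (abs_lt.mp h1).1.le (abs_lt.mp h1).2.le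
    have h2 := Finset.sum_le_sum this
    simp only [Finset.sum_const, Finset.card_erase_of_mem (Finset.mem_univ i₀), Finset.card_univ,
      Fintype.card_fin, nsmul_eq_mul, Nat.cast_sub hd, Nat.cast_one] at h2
    linarith
  have hxm : m ≤ ‖x‖ := hlam.trans (aux_succMin_le Λ x hxΛ hx0)
  have h5 : m ^ 2 ≤ ‖x‖ ^ 2 := by gcongr
  have h6 : (d - 1) * (m / d) ^ 2 < m ^ 2 := by
    rw [div_pow, mul_div_assoc', div_lt_iff₀ (by positivity)]
    have : (0 : ℝ) < m ^ 2 := by positivity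
    have h7 : (d : ℝ) - 1 < (d : ℝ) ^ 2 := by nlinarith
    nlinarith [mul_lt_mul_of_pos_right h7 this]
  linarith

theorem stmt10 {d : ℕ} (hd : 1 ≤ d) (N : ℕ) (hN : 1 ≤ N) (c₁ : ℝ) (hc : 0 < c₁)
    (Λ : Set (Euc d)) (T : Matrix (Fin d) (Fin d) ℝ) (hT : IsLatticeOf Λ T)
    (hdet : |T.det| = 1 / N)
    (hlam : succMin Λ 1 ≥ c₁ * (N : ℝ) ^ (-(1 : ℝ) / d)) :
    succMin (dualLat Λ) 1 ≥
      (2 ^ d * Real.Gamma (1 + (d : ℝ) / 2) /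
          ((d.factorial : ℝ) * Real.pi ^ ((d : ℝ) / 2))) *
        (c₁ / d) ^ (d - 1) * (N : ℝ) ^ ((1 : ℝ) / d) := by
  have hdpos : (0 : ℝ) < d := by exact_mod_cast hd
  have hNpos : (0 : ℝ) < N := by exact_mod_cast hN
  apply aux_le_succMin
  · let i₀ : Fin d := ⟨0, hd⟩
    obtain ⟨hu, hΛ⟩ := hT
    have hinv : T⁻¹ * T = 1 := Matrix.nonsing_inv_mul T hu
    have key : ∀ k : Fin d → ℤ, ∀ x : Euc d, (∀ i, x i = ∑ j, T i j * (k j : ℝ)) →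
        ⟪x, (WithLp.toLp 2 (T⁻¹ i₀) : Euc d)⟫ = (k i₀ : ℝ) := by
      intro k x hx
      have h1 : T⁻¹.mulVec (T.mulVec fun j => (k j : ℝ)) i₀ = k i₀ := by
        rw [Matrix.mulVec_mulVec, hinv, Matrix.one_mulVec]
      rw [← h1, PiLp.inner_apply]
      simp only [Matrix.mulVec, dotProduct, RCLike.inner_apply, conj_trivial, hx]
    refine ⟨WithLp.toLp 2 (T⁻¹ i₀), ?_, ?_⟩
    · intro x hx
      rw [hΛ] at hx
      obtain ⟨k, hk⟩ := hx
      exact ⟨k i₀, key k x hk⟩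
    · intro h0
      have := key (fun _ => 1) (WithLp.toLp 2 fun i => ∑ j, T i j * ((1 : ℤ) : ℝ)) (fun i => rfl)
      rw [h0] at this
      simp at this
  · intro y hy hy0
    have hm : 0 < c₁ * (N : ℝ) ^ (-(1 : ℝ) / d) := by positivity
    refine le_trans ?_ (aux_main hd Λ T hT _ hm hlam y hy hy0)
    have hK : 2 ^ d * Real.Gamma (1 + (d : ℝ) / 2) /
          ((d.factorial : ℝ) * Real.pi ^ ((d : ℝ) / 2)) ≤ 1 :=
      div_le_one_of_le₀ (aux_const d) (by positivity)
    have hpow : (N : ℝ) * ((N : ℝ) ^ (-(1 : ℝ) / d)) ^ (d - 1) = (N : ℝ) ^ ((1 : ℝ) / d) := by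
      rw [← Real.rpow_natCast, ← Real.rpow_mul hNpos.le]
      nth_rewrite 1 [← Real.rpow_one (N : ℝ)]
      rw [← Real.rpow_add hNpos]
      congr 1
      rw [Nat.cast_sub hd]
      field_simp
      push_cast
      ring
    have heq : |T.det|⁻¹ * (c₁ * (N : ℝ) ^ (-(1 : ℝ) / d) / d) ^ (d - 1) =
        (c₁ / d) ^ (d - 1) * (N : ℝ) ^ ((1 : ℝ) / d) := by
      rw [hdet, one_div, inv_inv, ← hpow, mul_div_right_comm, mul_pow]
      ring
    rw [heq, mul_assoc]
    exact mul_le_of_le_one_left (by positivity) hK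

end
end
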